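/- Let g ∈ PC[0,1] be non-constant with jump locations t_1 < ... < t_n, minimal jump height h_min, maximal jump height h_max and minimal interval length l_min, let K be a symmetric, nonnegative, normalized kernel with supp K ⊆ [−κ,κ] strictly positive near 0, and let X^k = {x_1,...,x_m} ⊆ [0,1] be a discretization set of mesh size η = max_i |x_i − x_{i−1}|. Assume κ + η ≤ h_min·l_min / (2·(8·h_max + h_min)) and let γ satisfy 2·(κ+η)·h_max ≤ γ ≤ (1/2)·h_min·l_min − (h_min + 6·h_max)·(κ+η). Let g^k be any X^k-discretization of g, obtained by moving each jump location t_i of g to a nearest point of X^k, and let f^k = Σ_j S_k f(j)·1_{I_j} be obtained from f = K*g by integral or point sampling on X^k. Then g^k is a minimizer of the discrete L¹-Potts functional P_γ^k(u) = γ·J(u) + ‖u − f^k‖_{L¹} over u ∈ PC^k[0,1]; the X^k-discretizations of g of this type are the only minimizers, so the minimizer is unique whenever each jump location of g has a unique nearest neighbor in X^k; and if (X^k) is a nested sequence of discretization sets whose union is dense in [0,1], every sequence of minimizers g^k converges to g in L¹[0,1]. -/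

import Mathlib

open MeasureTheory Filter Set
open scoped ENNReal Classical

noncomputable section

/-- The Lebesgue measure restricted to `[0,1]`. -/
def mu01 : Measure ℝ := volume.restrict (Set.Icc (0:ℝ) 1)

/-- The step function determined by partition points `x` and values `a`. -/
def stepF {m : ℕ} (x : Fin (m + 1) → ℝ) (a : Fin m → ℝ) : ℝ → ℝ := fun t =>
  ∑ l : Fin m, Set.indicator (Set.Ioo (x l.castSucc) (x l.succ)) (fun _ => a l) t

/-- `u` is a.e. on `[0,1]` represented by the step function with partition `x` and values `a`. -/
def IsPCRep (u : ℝ → ℝ) {m : ℕ} (x : Fin (m + 1) → ℝ) (a : Fin m → ℝ) : Prop :=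
  StrictMono x ∧ x 0 = 0 ∧ x (Fin.last m) = 1 ∧ ∀ᵐ t ∂mu01, u t = stepF x a t

/-- `u` is piecewise constant on `[0,1]` (up to a.e. equality). -/
def IsPC (u : ℝ → ℝ) : Prop :=
  ∃ (m : ℕ) (x : Fin (m + 1) → ℝ) (a : Fin m → ℝ), IsPCRep u x a

/-- The number of jumps `J(u)`: the minimal number of interior partition points over all
piecewise constant representations of `u`. -/
def jumps (u : ℝ → ℝ) : ℕ :=
  sInf {jj : ℕ | ∃ (x : Fin (jj + 2) → ℝ) (a : Fin (jj + 1) → ℝ), IsPCRep u x a}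

/-- `u` is piecewise constant with all jump locations inside `S`. -/
def IsPCIn (u : ℝ → ℝ) (S : Set ℝ) : Prop :=
  ∃ (m : ℕ) (x : Fin (m + 1) → ℝ) (a : Fin m → ℝ), IsPCRep u x a ∧
    ∀ i : Fin (m + 1), i ≠ 0 → i ≠ Fin.last m → x i ∈ S

/-- The `L¹[0,1]` distance of two functions. -/
def L1dist (u v : ℝ → ℝ) : ℝ := ∫ t, |u t - v t| ∂mu01

/-- The continuous `L¹`-Potts functional `P_γ` with data `f`. -/
def Potts (γ : ℝ) (f u : ℝ → ℝ) : ℝ≥0∞ :=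
  if IsPC u then ENNReal.ofReal (γ * (jumps u : ℝ) + L1dist u f) else ⊤

/-- The (semi-)discrete `L¹`-Potts functional with data `f`, restricted to piecewise
constant functions whose jumps lie in `S`. -/
def PottsIn (γ : ℝ) (f : ℝ → ℝ) (S : Set ℝ) (u : ℝ → ℝ) : ℝ≥0∞ :=
  if IsPCIn u S then ENNReal.ofReal (γ * (jumps u : ℝ) + L1dist u f) else ⊤

/-- Convolution `(K*g)(t) = ∫ K(s)·g(t−s) ds`. -/
def convK (K g : ℝ → ℝ) : ℝ → ℝ := fun t => ∫ s, K s * g (t - s)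

/-- The piecewise constant function on `ℝ` with jump locations `j` and values `α`
(extended constantly outside the jump region): at `t`, its value is `α i` where `i`
is the number of jump locations strictly below `t`. -/
def stepOn {n : ℕ} (j : Fin n → ℝ) (α : Fin (n + 1) → ℝ) : ℝ → ℝ := fun t =>
  α ⟨(Finset.univ.filter fun i => j i < t).card,
      Nat.lt_succ_of_le ((Finset.card_filter_le _ _).trans (by simp))⟩

/-- The jump locations together with the endpoints `0` and `1`. -/
def jext {n : ℕ} (j : Fin (n + 1) → ℝ) : Fin (n + 3) → ℝ :=
  Fin.cons (0 : ℝ) (Fin.snoc j (1 : ℝ))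

/-- The minimal length `l_min` of the intervals of constancy (inside `[0,1]`). -/
def lmin {n : ℕ} (j : Fin (n + 1) → ℝ) : ℝ :=
  Finset.univ.inf' Finset.univ_nonempty
    fun i : Fin (n + 2) => jext j i.succ - jext j i.castSucc

/-- The minimal jump height `h_min`. -/
def hjumpMin {n : ℕ} (α : Fin (n + 2) → ℝ) : ℝ :=
  Finset.univ.inf' Finset.univ_nonempty fun i : Fin (n + 1) => |α i.succ - α i.castSucc|

/-- The maximal jump height `h_max`. -/
def hjumpMax {n : ℕ} (α : Fin (n + 2) → ℝ) : ℝ :=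
  Finset.univ.sup' Finset.univ_nonempty fun i : Fin (n + 1) => |α i.succ - α i.castSucc|

/-- The (real-valued) `L¹`-Potts value `γ·J(u) + ‖u − f‖₁` for piecewise constant `u`. -/
def PottsVal (γ : ℝ) (f u : ℝ → ℝ) : ℝ := γ * (jumps u : ℝ) + L1dist u f

/-- `fk` agrees, on each interval between consecutive discretization points of
`{0,1} ∪ X`, with the average of `f` over that interval (integral sampling). -/
def IntegralSampled (X : Set ℝ) (f fk : ℝ → ℝ) : Prop :=
  ∀ a b : ℝ, a ∈ insert (0:ℝ) (insert 1 X) → b ∈ insert (0:ℝ) (insert 1 X) → a < b →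
    Set.Ioo a b ∩ X = ∅ →
    ∀ t ∈ Set.Ioo a b, fk t = (b - a)⁻¹ * ∫ s in Set.Ioo a b, f s

/-- `fk` agrees, on each interval between consecutive discretization points of
`{0,1} ∪ X`, with the value of `f` at the midpoint of that interval (point sampling). -/
def PointSampled (X : Set ℝ) (f fk : ℝ → ℝ) : Prop :=
  ∀ a b : ℝ, a ∈ insert (0:ℝ) (insert 1 X) → b ∈ insert (0:ℝ) (insert 1 X) → a < b →
    Set.Ioo a b ∩ X = ∅ →
    ∀ t ∈ Set.Ioo a b, fk t = f ((a + b) / 2)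

lemma setIntegral_abs_sub_add_le {S P : Set ℝ} (hP : MeasurableSet P)
    (hPS : P ⊆ S) (hfin : volume S ≠ ∞) {f : ℝ → ℝ} (hf : IntegrableOn f S) {p : ℝ}
    (hfP : ∀ᵐ t, t ∈ P → f t = p) (c : ℝ) :
    (∫ t in S, |p - f t|) + |c - p| * (2 * volume.real P - volume.real S) ≤
      ∫ t in S, |c - f t| := by
  have hSP : volume (S \ P) ≠ ∞ := measure_ne_top_of_subset sdiff_subset hfin
  have hPf : volume P ≠ ∞ := measure_ne_top_of_subset hPS hfin
  have hInt : ∀ c : ℝ, IntegrableOn (fun t => |c - f t|) S := fun c =>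
    ((integrableOn_const hfin).sub hf).abs
  have hsplit : ∀ c : ℝ, ∫ t in S, |c - f t| =
      (∫ t in P, |c - f t|) + ∫ t in S \ P, |c - f t| := fun c => by
    rw [setIntegral_sdiff hP (hInt c) hPS]; ring
  have hPc : ∀ c : ℝ, ∫ t in P, |c - f t| = |c - p| * volume.real P := fun c => by
    rw [setIntegral_congr_ae (g := fun _ => |c - p|) hP
      (hfP.mono fun t ht h => by rw [ht h])]
    simp [mul_comm]
  have hrest : (∫ t in S \ P, |p - f t|) - |c - p| * volume.real (S \ P) ≤
      ∫ t in S \ P, |c - f t| := by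
    have : (∫ t in S \ P, |p - f t|) - |c - p| * volume.real (S \ P) =
        ∫ t in S \ P, (|p - f t| - |c - p|) := by
      rw [integral_sub ((hInt p).mono_set sdiff_subset) (integrableOn_const hSP)]
      simp [mul_comm]
    rw [this]
    refine integral_mono (((hInt p).mono_set sdiff_subset).sub (integrableOn_const hSP))
      ((hInt c).mono_set sdiff_subset) fun t => ?_
    have := abs_sub_le p c (f t)
    rw [abs_sub_comm p c] at this
    simp only
    linarith
  rw [measureReal_sdiff hPS hP (h₁ := hfin)] at hrest
  rw [hsplit, hsplit, hPc, hPc]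
  simp only [sub_self, abs_zero]
  linarith

lemma mul_abs_sub_le_setIntegral {S P Q : Set ℝ} (hP : MeasurableSet P) (hQ : MeasurableSet Q)
    (hPS : P ⊆ S) (hQS : Q ⊆ S) (hPQ : Disjoint P Q) (hfin : volume S ≠ ∞) {f : ℝ → ℝ}
    (hf : IntegrableOn f S) {p q : ℝ} (hfP : ∀ᵐ t, t ∈ P → f t = p)
    (hfQ : ∀ᵐ t, t ∈ Q → f t = q) {m : ℝ} (hm : 0 ≤ m) (hmP : m ≤ volume.real P)
    (hmQ : m ≤ volume.real Q) (c : ℝ) :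
    m * |q - p| ≤ ∫ t in S, |c - f t| := by
  have hInt : IntegrableOn (fun t => |c - f t|) S := ((integrableOn_const hfin).sub hf).abs
  have hle : ∫ t in P ∪ Q, |c - f t| ≤ ∫ t in S, |c - f t| :=
    setIntegral_mono_set hInt (Eventually.of_forall fun t => abs_nonneg _)
      (LE.le.eventuallyLE (union_subset hPS hQS))
  rw [setIntegral_union hPQ hQ (hInt.mono_set hPS) (hInt.mono_set hQS),
    setIntegral_congr_ae (g := fun _ => |c - p|) hP (hfP.mono fun t ht h => by rw [ht h]),
    setIntegral_congr_ae (g := fun _ => |c - q|) hQ (hfQ.mono fun t ht h => by rw [ht h])] at hle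
  simp only [setIntegral_const, smul_eq_mul] at hle
  have h1 := mul_le_mul_of_nonneg_right hmP (abs_nonneg (c - p))
  have h2 := mul_le_mul_of_nonneg_right hmQ (abs_nonneg (c - q))
  have h3 := mul_le_mul_of_nonneg_left (abs_sub_le q c p) hm
  rw [abs_sub_comm q c] at h3
  linarith

lemma eq_of_setIntegral_abs_sub_le {S P : Set ℝ} (hP : MeasurableSet P)
    (hPS : P ⊆ S) (hfin : volume S ≠ ∞) {f : ℝ → ℝ} (hf : IntegrableOn f S) {p : ℝ}
    (hfP : ∀ᵐ t, t ∈ P → f t = p) (hlt : volume.real S < 2 * volume.real P) (c : ℝ) :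
    (∫ t in S, |p - f t|) ≤ (∫ t in S, |c - f t|) ∧
      ((∫ t in S, |c - f t|) ≤ (∫ t in S, |p - f t|) → c = p) := by
  have h := setIntegral_abs_sub_add_le hP hPS hfin hf hfP c
  have hpos : 0 < 2 * volume.real P - volume.real S := by linarith
  refine ⟨by nlinarith [abs_nonneg (c - p)], fun hle => ?_⟩
  by_contra hne
  have := mul_pos (abs_pos.2 (sub_ne_zero.2 hne)) hpos
  linarith

lemma setIntegral_Ioo_split {a x b : ℝ} (hax : a < x) (hxb : x < b) {F : ℝ → ℝ}
    (hF : IntegrableOn F (Ioo a b)) :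
    ∫ t in Ioo a b, F t = (∫ t in Ioo a x, F t) + ∫ t in Ioo x b, F t := by
  have hI : IntegrableOn F (Ioc a b) := (integrableOn_Ioc_iff_integrableOn_Ioo (by simp)).2 hF
  have h1 : IntegrableOn F (Ioc a x) := hI.mono_set (Ioc_subset_Ioc_right hxb.le)
  have h2 : IntegrableOn F (Ioc x b) := hI.mono_set (Ioc_subset_Ioc_left hax.le)
  rw [← integral_Ioc_eq_integral_Ioo, ← integral_Ioc_eq_integral_Ioo,
    ← integral_Ioc_eq_integral_Ioo, ← setIntegral_union (Ioc_disjoint_Ioc_of_le le_rfl)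
      measurableSet_Ioc h1 h2, Ioc_union_Ioc_eq_Ioc hax.le hxb.le]

lemma ae_of_ae_Ioo_split {a x b : ℝ} {Q : ℝ → Prop}
    (h1 : ∀ᵐ t, t ∈ Ioo a x → Q t) (h2 : ∀ᵐ t, t ∈ Ioo x b → Q t) :
    ∀ᵐ t, t ∈ Ioo a b → Q t := by
  filter_upwards [h1, h2, compl_mem_ae_iff.2 (measure_singleton x)] with t ht1 ht2 htx ht
  rcases lt_trichotomy t x with h | h | h
  · exact ht1 ⟨ht.1, h⟩
  · exact absurd h htx
  · exact ht2 ⟨h, ht.2⟩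

section Window

variable {j r δ p q : ℝ} {f : ℝ → ℝ}

lemma setIntegral_abs_sub_window_le (hδ : 0 < δ) (hr : δ < r) {v : ℝ → ℝ}
    (hf : IntegrableOn f (Ioo (j - r) (j + r)))
    (hv : IntegrableOn v (Ioo (j - r) (j + r)))
    (hfl : ∀ᵐ t, t ∈ Ioo (j - r) (j - δ) → f t = p)
    (hfr : ∀ᵐ t, t ∈ Ioo (j + δ) (j + r) → f t = q)
    (hfm : ∀ᵐ t, t ∈ Ioo (j - r) (j + r) → |p - f t| + |q - f t| = |q - p|)
    (hvf : ∀ᵐ t, t ∈ Ioo (j - r) (j + r) → |v t - f t| ≤ |p - f t| ∧ |v t - f t| ≤ |q - f t|) :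
    ∫ t in Ioo (j - r) (j + r), |v t - f t| ≤ δ * |q - p| := by
  have hF : IntegrableOn (fun t => |v t - f t|) (Ioo (j - r) (j + r)) := (hv.sub hf).abs
  have hF' := hF.mono_set (Ioo_subset_Ioo_left (show j - r ≤ j - δ by linarith))
  rw [setIntegral_Ioo_split (show j - r < j - δ by linarith) (by linarith) hF,
    setIntegral_Ioo_split (show j - δ < j + δ by linarith) (by linarith) hF']
  have h1 : ∫ t in Ioo (j - r) (j - δ), |v t - f t| = 0 := by
    rw [setIntegral_congr_ae (g := fun _ => 0) measurableSet_Ioo, integral_zero]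
    filter_upwards [hvf, hfl] with t h1 h2 ht
    have := (h1 ⟨ht.1, by linarith [ht.2]⟩).1
    rw [h2 ht] at this ⊢
    simpa using this
  have h2 : ∫ t in Ioo (j + δ) (j + r), |v t - f t| = 0 := by
    rw [setIntegral_congr_ae (g := fun _ => 0) measurableSet_Ioo, integral_zero]
    filter_upwards [hvf, hfr] with t h1 h2 ht
    have := (h1 ⟨by linarith [ht.1], ht.2⟩).2
    rw [h2 ht] at this ⊢
    simpa using this
  have h3 : ∫ t in Ioo (j - δ) (j + δ), |v t - f t| ≤
      ∫ t in Ioo (j - δ) (j + δ), |q - p| / 2 := by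
    refine setIntegral_mono_on_ae
      (hF.mono_set (Ioo_subset_Ioo (by linarith) (by linarith)))
      (integrableOn_const measure_Ioo_lt_top.ne) measurableSet_Ioo ?_
    filter_upwards [hvf, hfm] with t h1 h2 ht
    have ht' : t ∈ Ioo (j - r) (j + r) := ⟨by linarith [ht.1], by linarith [ht.2]⟩
    linarith [(h1 ht').1, (h1 ht').2, h2 ht']
  have h4 : ∫ t in Ioo (j - δ) (j + δ), |q - p| / 2 = δ * |q - p| := by
    rw [setIntegral_const, Real.volume_real_Ioo_of_le (by linarith), smul_eq_mul]
    ring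
  linarith

lemma window_no_jump (hδ : 0 < δ) (hr : δ < r)
    (hf : IntegrableOn f (Ioo (j - r) (j + r)))
    (hfl : ∀ᵐ t, t ∈ Ioo (j - r) (j - δ) → f t = p)
    (hfr : ∀ᵐ t, t ∈ Ioo (j + δ) (j + r) → f t = q) (c : ℝ) :
    (r - δ) * |q - p| ≤ ∫ t in Ioo (j - r) (j + r), |c - f t| := by
  refine mul_abs_sub_le_setIntegral measurableSet_Ioo measurableSet_Ioo
    (Ioo_subset_Ioo_right (by linarith)) (Ioo_subset_Ioo_left (by linarith)) ?_
    measure_Ioo_lt_top.ne hf hfl hfr (by linarith) ?_ ?_ c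
  · rw [Set.disjoint_left]
    rintro t ⟨_, h1⟩ ⟨h2, _⟩
    linarith
  · rw [Real.volume_real_Ioo_of_le (by linarith)]; linarith
  · rw [Real.volume_real_Ioo_of_le (by linarith)]; linarith

lemma window_one_jump (hδ : 0 < δ) (hr : 4 * δ < r) (hpq : p ≠ q) {v : ℝ → ℝ}
    (hf : IntegrableOn f (Ioo (j - r) (j + r)))
    (hv : IntegrableOn v (Ioo (j - r) (j + r)))
    (hfl : ∀ᵐ t, t ∈ Ioo (j - r) (j - δ) → f t = p)
    (hfr : ∀ᵐ t, t ∈ Ioo (j + δ) (j + r) → f t = q)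
    (hfm : ∀ᵐ t, t ∈ Ioo (j - r) (j + r) → |p - f t| + |q - f t| = |q - p|)
    (hvf : ∀ᵐ t, t ∈ Ioo (j - r) (j + r) → |v t - f t| ≤ |p - f t| ∧ |v t - f t| ≤ |q - f t|)
    {x : ℝ} (hx : x ∈ Ioo (j - r) (j + r)) (c d : ℝ) :
    (∫ t in Ioo (j - r) (j + r), |v t - f t|) ≤
        (∫ t in Ioo (j - r) x, |c - f t|) + (∫ t in Ioo x (j + r), |d - f t|) ∧
      ((∫ t in Ioo (j - r) x, |c - f t|) + (∫ t in Ioo x (j + r), |d - f t|) ≤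
        (∫ t in Ioo (j - r) (j + r), |v t - f t|) → c = p ∧ d = q) := by
  have hE := setIntegral_abs_sub_window_le hδ (by linarith) hf hv hfl hfr hfm hvf
  have hfL : IntegrableOn f (Ioo (j - r) x) := hf.mono_set (Ioo_subset_Ioo_right hx.2.le)
  have hfR : IntegrableOn f (Ioo x (j + r)) := hf.mono_set (Ioo_subset_Ioo_left hx.1.le)
  have hh : 0 < |q - p| := abs_pos.2 (sub_ne_zero.2 hpq.symm)
  have hL0 : 0 ≤ ∫ t in Ioo (j - r) x, |c - f t| := integral_nonneg fun _ => abs_nonneg _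
  have hR0 : 0 ≤ ∫ t in Ioo x (j + r), |d - f t| := integral_nonneg fun _ => abs_nonneg _
  obtain ⟨hx1, hx2⟩ := hx
  rcases le_or_gt (j + r - 2 * δ) x with hxr | hxr
  · have := mul_abs_sub_le_setIntegral (S := Ioo (j - r) x) (P := Ioo (j - r) (j - δ))
      (Q := Ioo (j + δ) x) measurableSet_Ioo measurableSet_Ioo
      (Ioo_subset_Ioo_right (by linarith)) (Ioo_subset_Ioo_left (by linarith))
      (by rw [Set.disjoint_left]; rintro t ⟨_, h1⟩ ⟨h2, _⟩; linarith)
      measure_Ioo_lt_top.ne hfL hfl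
      (hfr.mono fun t h ht => h ⟨ht.1, by linarith [ht.2]⟩) (m := r - 3 * δ) (by linarith)
      (by rw [Real.volume_real_Ioo_of_le (by linarith)]; linarith)
      (by rw [Real.volume_real_Ioo_of_le (by linarith)]; linarith) c
    have : δ * |q - p| < (r - 3 * δ) * |q - p| := by
      apply mul_lt_mul_of_pos_right _ hh; linarith
    exact ⟨by linarith, fun h => by linarith⟩
  rcases le_or_gt x (j - r + 2 * δ) with hxl | hxl
  · have := mul_abs_sub_le_setIntegral (S := Ioo x (j + r)) (P := Ioo x (j - δ))
      (Q := Ioo (j + δ) (j + r)) measurableSet_Ioo measurableSet_Ioo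
      (Ioo_subset_Ioo_right (by linarith)) (Ioo_subset_Ioo_left (by linarith))
      (by rw [Set.disjoint_left]; rintro t ⟨_, h1⟩ ⟨h2, _⟩; linarith)
      measure_Ioo_lt_top.ne hfR (hfl.mono fun t h ht => h ⟨by linarith [ht.1], ht.2⟩)
      hfr (m := r - 3 * δ) (by linarith)
      (by rw [Real.volume_real_Ioo_of_le (by linarith)]; linarith)
      (by rw [Real.volume_real_Ioo_of_le (by linarith)]; linarith) d
    have : δ * |q - p| < (r - 3 * δ) * |q - p| := by
      apply mul_lt_mul_of_pos_right _ hh; linarith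
    exact ⟨by linarith, fun h => by linarith⟩
  obtain ⟨hc1, hc2⟩ := eq_of_setIntegral_abs_sub_le (S := Ioo (j - r) x)
    (P := Ioo (j - r) (min x (j - δ))) measurableSet_Ioo (Ioo_subset_Ioo_right (min_le_left _ _))
    measure_Ioo_lt_top.ne hfL
    (hfl.mono fun t h ht => h ⟨ht.1, ht.2.trans_le (min_le_right _ _)⟩)
    (by
      rw [Real.volume_real_Ioo_of_le hx1.le,
        Real.volume_real_Ioo_of_le (le_min hx1.le (by linarith))]
      rcases min_cases x (j - δ) with h | h <;> linarith) c
  obtain ⟨hd1, hd2⟩ := eq_of_setIntegral_abs_sub_le (S := Ioo x (j + r))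
    (P := Ioo (max x (j + δ)) (j + r)) measurableSet_Ioo (Ioo_subset_Ioo_left (le_max_left _ _))
    measure_Ioo_lt_top.ne hfR
    (hfr.mono fun t h ht => h ⟨(le_max_right _ _).trans_lt ht.1, ht.2⟩)
    (by
      rw [Real.volume_real_Ioo_of_le hx2.le,
        Real.volume_real_Ioo_of_le (max_le hx2.le (by linarith))]
      rcases max_cases x (j + δ) with h | h <;> linarith) d
  have hF : IntegrableOn (fun t => |v t - f t|) (Ioo (j - r) (j + r)) := (hv.sub hf).abs
  have hEL : ∫ t in Ioo (j - r) x, |v t - f t| ≤ ∫ t in Ioo (j - r) x, |p - f t| :=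
    setIntegral_mono_on_ae (hF.mono_set (Ioo_subset_Ioo_right hx2.le))
      ((integrableOn_const measure_Ioo_lt_top.ne).sub hfL).abs measurableSet_Ioo
      (hvf.mono fun t h ht => (h ⟨ht.1, ht.2.trans hx2⟩).1)
  have hER : ∫ t in Ioo x (j + r), |v t - f t| ≤ ∫ t in Ioo x (j + r), |q - f t| :=
    setIntegral_mono_on_ae (hF.mono_set (Ioo_subset_Ioo_left hx1.le))
      ((integrableOn_const measure_Ioo_lt_top.ne).sub hfR).abs measurableSet_Ioo
      (hvf.mono fun t h ht => (h ⟨hx1.trans ht.1, ht.2⟩).2)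
  have hs := setIntegral_Ioo_split hx1 hx2 hF
  exact ⟨by linarith, fun h => ⟨hc2 (by linarith), hd2 (by linarith)⟩⟩

/-- On a window around one jump, the function `v`, which takes whichever of the two plateau values
is nearer to the data, has minimal Potts energy with one jump; equality determines the competitor
up to the jump position. -/
lemma window_energy (hδ : 0 < δ) (hr : 4 * δ < r) (hpq : p ≠ q) {u v : ℝ → ℝ} {γ : ℝ}
    (hγ1 : δ * |q - p| < γ) (hγ2 : γ + δ * |q - p| < (r - δ) * |q - p|)
    (hf : IntegrableOn f (Ioo (j - r) (j + r)))
    (hu : IntegrableOn u (Ioo (j - r) (j + r)))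
    (hv : IntegrableOn v (Ioo (j - r) (j + r)))
    (hfl : ∀ᵐ t, t ∈ Ioo (j - r) (j - δ) → f t = p)
    (hfr : ∀ᵐ t, t ∈ Ioo (j + δ) (j + r) → f t = q)
    (hfm : ∀ᵐ t, t ∈ Ioo (j - r) (j + r) → |p - f t| + |q - f t| = |q - p|)
    (hvf : ∀ᵐ t, t ∈ Ioo (j - r) (j + r) → |v t - f t| ≤ |p - f t| ∧ |v t - f t| ≤ |q - f t|)
    (T : Finset ℝ)
    (hT : ∀ a b, j - r ≤ a → a < b → b ≤ j + r → (∀ z ∈ T, z ∉ Ioo a b) →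
      ∃ c, ∀ᵐ t, t ∈ Ioo a b → u t = c) :
    γ + (∫ t in Ioo (j - r) (j + r), |v t - f t|) ≤
        γ * ((T.filter (· ∈ Ioo (j - r) (j + r))).card : ℝ) +
          ∫ t in Ioo (j - r) (j + r), |u t - f t| ∧
      (γ * ((T.filter (· ∈ Ioo (j - r) (j + r))).card : ℝ) +
          (∫ t in Ioo (j - r) (j + r), |u t - f t|) ≤
          γ + (∫ t in Ioo (j - r) (j + r), |v t - f t|) →
        ∃ x ∈ Ioo (j - r) (j + r), (∀ᵐ t, t ∈ Ioo (j - r) x → u t = p) ∧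
          (∀ᵐ t, t ∈ Ioo x (j + r) → u t = q) ∧
          ∀ᵐ t, t ∈ Ioo (j - r) (j + r) → |u t - f t| = |v t - f t|) := by
  have hE := setIntegral_abs_sub_window_le hδ (by linarith) hf hv hfl hfr hfm hvf
  have hu0 : 0 ≤ ∫ t in Ioo (j - r) (j + r), |u t - f t| := integral_nonneg fun _ => abs_nonneg _
  have hh : 0 < |q - p| := abs_pos.2 (sub_ne_zero.2 hpq.symm)
  have hγ : 0 < γ := (mul_pos hδ hh).trans hγ1
  have hFu : IntegrableOn (fun t => |u t - f t|) (Ioo (j - r) (j + r)) := (hu.sub hf).abs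
  have hFv : IntegrableOn (fun t => |v t - f t|) (Ioo (j - r) (j + r)) := (hv.sub hf).abs
  obtain h0 | h1 | h2 : (T.filter (· ∈ Ioo (j - r) (j + r))).card = 0 ∨
      (T.filter (· ∈ Ioo (j - r) (j + r))).card = 1 ∨
      2 ≤ (T.filter (· ∈ Ioo (j - r) (j + r))).card := by omega
  · obtain ⟨c, hc⟩ := hT (j - r) (j + r) le_rfl (by linarith) le_rfl (by
      rw [Finset.card_eq_zero, Finset.filter_eq_empty_iff] at h0
      exact fun z hz => h0 hz)
    have h := window_no_jump hδ (by linarith) hf hfl hfr c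
    rw [← setIntegral_congr_ae (f := fun t => |u t - f t|) measurableSet_Ioo
      (hc.mono fun t ht h => by rw [ht h])] at h
    rw [h0]
    simp only [Nat.cast_zero, mul_zero, zero_add]
    exact ⟨by linarith, fun h => by linarith⟩
  · obtain ⟨x, hx⟩ := Finset.card_eq_one.1 h1
    have hxm : x ∈ T.filter (· ∈ Ioo (j - r) (j + r)) := by rw [hx]; simp
    have hxB := (Finset.mem_filter.1 hxm).2
    have huniq : ∀ z ∈ T, z ∈ Ioo (j - r) (j + r) → z = x := fun z hz hzB => by
      have : z ∈ T.filter (· ∈ Ioo (j - r) (j + r)) := Finset.mem_filter.2 ⟨hz, hzB⟩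
      rwa [hx, Finset.mem_singleton] at this
    obtain ⟨c, hc⟩ := hT (j - r) x le_rfl hxB.1 hxB.2.le fun z hz hzm =>
      hzm.2.ne (huniq z hz ⟨hzm.1, hzm.2.trans hxB.2⟩)
    obtain ⟨d, hd⟩ := hT x (j + r) hxB.1.le hxB.2 le_rfl fun z hz hzm =>
      hzm.1.ne' (huniq z hz ⟨hxB.1.trans hzm.1, hzm.2⟩)
    have hsum : ∫ t in Ioo (j - r) (j + r), |u t - f t| =
        (∫ t in Ioo (j - r) x, |c - f t|) + (∫ t in Ioo x (j + r), |d - f t|) := by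
      rw [setIntegral_Ioo_split hxB.1 hxB.2 hFu]
      congr 1
      · exact setIntegral_congr_ae measurableSet_Ioo (hc.mono fun t ht h => by rw [ht h])
      · exact setIntegral_congr_ae measurableSet_Ioo (hd.mono fun t ht h => by rw [ht h])
    obtain ⟨hw1, hw2⟩ := window_one_jump hδ hr hpq hf hv hfl hfr hfm hvf hxB c d
    rw [h1, Nat.cast_one, mul_one]
    refine ⟨by linarith, fun hle => ?_⟩
    obtain ⟨rfl, rfl⟩ := hw2 (by linarith)
    refine ⟨x, hxB, hc, hd, ?_⟩
    have hge : ∀ᵐ t, t ∈ Ioo (j - r) (j + r) → |v t - f t| ≤ |u t - f t| := by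
      refine ae_of_ae_Ioo_split (x := x) ?_ ?_
      · filter_upwards [hc, hvf] with t h1 h2 ht
        rw [h1 ht]
        exact (h2 ⟨ht.1, ht.2.trans hxB.2⟩).1
      · filter_upwards [hd, hvf] with t h1 h2 ht
        rw [h1 ht]
        exact (h2 ⟨hxB.1.trans ht.1, ht.2⟩).2
    have hInt : ∫ t in Ioo (j - r) (j + r), |v t - f t| =
        ∫ t in Ioo (j - r) (j + r), |u t - f t| := by linarith
    have := (integral_eq_iff_of_ae_le hFv hFu
      ((ae_restrict_iff' measurableSet_Ioo).2 hge)).1 hInt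
    exact ((ae_restrict_iff' measurableSet_Ioo).1 this).mono fun t ht h => (ht h).symm
  · have : (2 : ℝ) ≤ ((T.filter (· ∈ Ioo (j - r) (j + r))).card : ℝ) := by exact_mod_cast h2
    have := mul_le_mul_of_nonneg_left this hγ.le
    exact ⟨by linarith, fun h => by linarith⟩

end Window

section Kernel

/-- The distribution function of a kernel. -/
def kernelCdf (K : ℝ → ℝ) (y : ℝ) : ℝ := ∫ s in Iic y, K s

variable {K : ℝ → ℝ} {κ : ℝ}

lemma kernelCdf_nonneg (hKpos : ∀ x, 0 ≤ K x) (y : ℝ) : 0 ≤ kernelCdf K y :=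
  integral_nonneg fun _ => hKpos _

lemma kernelCdf_sub (hKint : Integrable K) (x y : ℝ) :
    kernelCdf K y - kernelCdf K x = ∫ s in x..y, K s :=
  intervalIntegral.integral_Iic_sub_Iic hKint.integrableOn hKint.integrableOn

lemma kernelCdf_mono (hKint : Integrable K) (hKpos : ∀ x, 0 ≤ K x) : Monotone (kernelCdf K) :=
  fun x y hxy => by
    have := kernelCdf_sub hKint x y
    have := intervalIntegral.integral_nonneg (f := K) (μ := volume) hxy fun u _ => hKpos u
    linarith

lemma kernelCdf_continuous (hKint : Integrable K) : Continuous (kernelCdf K) := by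
  have : kernelCdf K = fun y => kernelCdf K 0 + ∫ s in (0 : ℝ)..y, K s := by
    funext y
    rw [← kernelCdf_sub hKint]
    ring
  rw [this]
  exact continuous_const.add (hKint.continuous_primitive 0)

lemma kernelCdf_neg (hKint : Integrable K) (hKsym : ∀ x, K (-x) = K x)
    (hKnorm : (∫ x, K x) = 1) (y : ℝ) : kernelCdf K (-y) = 1 - kernelCdf K y := by
  have h1 : kernelCdf K (-y) = ∫ s in Ioi y, K s := by
    have := integral_comp_neg_Iic (-y) K
    simp only [hKsym, neg_neg] at this
    exact this
  have h2 := intervalIntegral.integral_Iic_add_Ioi (b := y) hKint.integrableOn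
    hKint.integrableOn (f := K) (μ := volume)
  rw [hKnorm] at h2
  rw [h1, kernelCdf]
  linarith

lemma kernelCdf_eq_zero (hKsupp : Function.support K ⊆ Icc (-κ) κ) {y : ℝ} (hy : y < -κ) :
    kernelCdf K y = 0 := by
  rw [kernelCdf, setIntegral_congr_fun (g := fun _ => 0) measurableSet_Iic, integral_zero]
  intro s hs
  by_contra hne
  exact absurd ((hKsupp (Function.mem_support.2 hne)).1) (by linarith [mem_Iic.1 hs])

lemma kernelCdf_neg_lt (hKint : Integrable K) (hKpos : ∀ x, 0 ≤ K x)
    (hKpos0 : ∃ ε > 0, ∀ x : ℝ, |x| < ε → 0 < K x) {y : ℝ} (hy : 0 < y) :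
    kernelCdf K (-y) < kernelCdf K y := by
  obtain ⟨ε, hε, hK⟩ := hKpos0
  have hm : 0 < min y (ε / 2) := lt_min hy (by linarith)
  have h1 := kernelCdf_mono hKint hKpos (show -y ≤ 0 by linarith)
  have h2 := kernelCdf_mono hKint hKpos (min_le_left y (ε / 2))
  have h3 := kernelCdf_sub hKint 0 (min y (ε / 2))
  have h4 : 0 < ∫ s in (0 : ℝ)..min y (ε / 2), K s :=
    intervalIntegral.intervalIntegral_pos_of_pos_on hKint.intervalIntegrable
      (fun x hx => hK x (by
        rw [abs_of_pos hx.1]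
        linarith [hx.2, min_le_right y (ε / 2)])) hm
  linarith

/-- Reflecting the sampling interval `(a, b)` about its midpoint. -/
lemma two_mul_integral_kernelCdf (hKint : Integrable K) (hKsym : ∀ x, K (-x) = K x)
    (hKnorm : (∫ x, K x) = 1) (a b j : ℝ) :
    2 * ∫ y in a..b, kernelCdf K (y - j) =
      (b - a) + ((∫ y in a..b, kernelCdf K (y - j)) -
        ∫ y in a..b, kernelCdf K (y - (a + b - j))) := by
  have hc := kernelCdf_continuous hKint
  have h : ∫ y in a..b, kernelCdf K (y - j) =
      ∫ y in a..b, (1 - kernelCdf K (y - (a + b - j))) := by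
    have := intervalIntegral.integral_comp_sub_left (a := a) (b := b)
      (fun y => kernelCdf K (y - j)) (a + b)
    rw [show a + b - b = a by ring, show a + b - a = b by ring] at this
    rw [← this]
    congr 1
    funext y
    rw [← kernelCdf_neg hKint hKsym hKnorm]
    congr 1
    ring
  have h' : ∫ y in a..b, (1 - kernelCdf K (y - (a + b - j))) =
      (b - a) - ∫ y in a..b, kernelCdf K (y - (a + b - j)) := by
    have hi : IntervalIntegrable (fun y => kernelCdf K (y - (a + b - j))) volume a b :=
      (hc.comp (continuous_sub_right _)).intervalIntegrable _ _
    rw [intervalIntegral.integral_sub intervalIntegrable_const hi]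
    simp
  linarith

/-- The value obtained by integral or point sampling on `(a, b)` of a smoothed jump at `j` is a
convex combination of the two plateau values, and its weight tells on which side of `j` the
midpoint of `(a, b)` lies. -/
lemma exists_sample_weight (hKint : Integrable K) (hKpos : ∀ x, 0 ≤ K x)
    (hKsym : ∀ x, K (-x) = K x) (hKnorm : (∫ x, K x) = 1)
    (hKsupp : Function.support K ⊆ Icc (-κ) κ)
    (hKpos0 : ∃ ε > 0, ∀ x : ℝ, |x| < ε → 0 < K x) {a b j p q : ℝ} (hab : a < b) {F : ℝ → ℝ}
    (hF : ∀ y ∈ Icc a b, F y = p + (q - p) * kernelCdf K (y - j)) {z : ℝ}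
    (hz : z = (b - a)⁻¹ * (∫ s in Ioo a b, F s) ∨ z = F ((a + b) / 2)) :
    ∃ w, z = p + (q - p) * w ∧ 0 ≤ w ∧ w ≤ 1 ∧
      (2 * j ≤ a + b → 1 / 2 ≤ w) ∧ (2 * j < a + b → 1 / 2 < w) ∧
      (a + b ≤ 2 * j → w ≤ 1 / 2) ∧ (a + b < 2 * j → w < 1 / 2) ∧
      (b < j - κ → w = 0) ∧ (j + κ < a → w = 1) := by
  have hc := kernelCdf_continuous hKint
  have hmono := kernelCdf_mono hKint hKpos
  have hneg := kernelCdf_neg hKint hKsym hKnorm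
  have hzero : ∀ y, y < -κ → kernelCdf K y = 0 := fun y hy => kernelCdf_eq_zero hKsupp hy
  have hone : ∀ y, κ < y → kernelCdf K y = 1 := fun y hy => by
    have := hneg y
    rw [hzero (-y) (by linarith)] at this
    linarith
  have hnn := kernelCdf_nonneg hKpos
  have hle : ∀ y, kernelCdf K y ≤ 1 := fun y => by linarith [hneg y, hnn (-y)]
  rcases hz with hz | hz
  · have hba : 0 < b - a := by linarith
    have hcj : ∀ i : ℝ, Continuous fun y => kernelCdf K (y - i) := fun i => hc.comp (by fun_prop)
    have hI : ∀ i : ℝ, IntervalIntegrable (fun y => kernelCdf K (y - i)) volume a b := fun i =>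
      (hcj i).intervalIntegrable _ _
    have hFI : ∫ s in Ioo a b, F s =
        p * (b - a) + (q - p) * ∫ y in a..b, kernelCdf K (y - j) := by
      rw [← integral_Ioc_eq_integral_Ioo, ← intervalIntegral.integral_of_le hab.le,
        intervalIntegral.integral_congr (g := fun y => p + (q - p) * kernelCdf K (y - j))
          (fun y hy => hF y (by rwa [uIcc_of_le hab.le] at hy)),
        intervalIntegral.integral_add (by simp) ((hI j).const_mul _),
        intervalIntegral.integral_const_mul]
      simp [mul_comm]
    have h2 := two_mul_integral_kernelCdf hKint hKsym hKnorm a b j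
    have hmle : ∀ i i' : ℝ, i ≤ i' → (∫ y in a..b, kernelCdf K (y - i')) ≤
        ∫ y in a..b, kernelCdf K (y - i) := fun i i' h =>
      intervalIntegral.integral_mono_on hab.le (hI i') (hI i) fun y _ => hmono (by linarith)
    have hmlt : ∀ i i' : ℝ, i < i' → i + i' = a + b → (∫ y in a..b, kernelCdf K (y - i')) <
        ∫ y in a..b, kernelCdf K (y - i) := fun i i' h hs =>
      intervalIntegral.integral_lt_integral_of_continuousOn_of_le_of_exists_lt hab
        (hcj i').continuousOn (hcj i).continuousOn (fun y _ => hmono (by linarith))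
        ⟨(a + b) / 2, ⟨by linarith, by linarith⟩, by
          have := kernelCdf_neg_lt hKint hKpos hKpos0 (show 0 < (a + b) / 2 - i by linarith)
          rwa [show -((a + b) / 2 - i) = (a + b) / 2 - i' by linarith] at this⟩
    have hconst : ∀ c : ℝ, ∫ _ in a..b, c = c * (b - a) := fun c => by simp [mul_comm]
    refine ⟨(b - a)⁻¹ * ∫ y in a..b, kernelCdf K (y - j), ?_, ?_, ?_, ?_, ?_, ?_, ?_, ?_, ?_⟩
    · rw [hz, hFI]
      field_simp
    · exact mul_nonneg (inv_nonneg.2 hba.le)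
        (intervalIntegral.integral_nonneg hab.le fun y _ => hnn _)
    · rw [inv_mul_le_iff₀ hba]
      have := intervalIntegral.integral_mono_on hab.le (hI j)
        (intervalIntegrable_const (c := (1 : ℝ))) fun y _ => hle (y - j)
      rw [hconst] at this
      linarith
    · intro h
      rw [le_inv_mul_iff₀ hba]
      linarith [hmle j (a + b - j) (by linarith)]
    · intro h
      rw [lt_inv_mul_iff₀ hba]
      linarith [hmlt j (a + b - j) (by linarith) (by ring)]
    · intro h
      rw [inv_mul_le_iff₀ hba]
      linarith [hmle (a + b - j) j (by linarith)]
    · intro h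
      rw [inv_mul_lt_iff₀ hba]
      linarith [hmlt (a + b - j) j (by linarith) (by ring)]
    · intro h
      rw [intervalIntegral.integral_congr (g := fun _ => (0 : ℝ)), hconst]
      · simp
      · intro y hy
        rw [uIcc_of_le hab.le] at hy
        exact hzero _ (by linarith [hy.2])
    · intro h
      rw [intervalIntegral.integral_congr (g := fun _ => (1 : ℝ)), hconst]
      · field_simp
      · intro y hy
        rw [uIcc_of_le hab.le] at hy
        exact hone _ (by linarith [hy.1])
  · have h0 : kernelCdf K 0 = 1 / 2 := by
      have := hneg 0
      rw [neg_zero] at this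
      linarith
    refine ⟨kernelCdf K ((a + b) / 2 - j), ?_, hnn _, hle _, ?_, ?_, ?_, ?_, ?_, ?_⟩
    · rw [hz, hF _ ⟨by linarith, by linarith⟩]
    · intro h
      rw [← h0]
      exact hmono (by linarith)
    · intro h
      have := kernelCdf_neg_lt hKint hKpos hKpos0 (show 0 < (a + b) / 2 - j by linarith)
      linarith [hneg ((a + b) / 2 - j)]
    · intro h
      rw [← h0]
      exact hmono (by linarith)
    · intro h
      have := kernelCdf_neg_lt hKint hKpos hKpos0 (show 0 < -((a + b) / 2 - j) by linarith)
      rw [neg_neg] at this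
      linarith [hneg ((a + b) / 2 - j)]
    · exact fun h => hzero _ (by linarith)
    · exact fun h => hone _ (by linarith)

lemma convK_eq_of_eqOn_const (hKnorm : (∫ x, K x) = 1)
    (hKsupp : Function.support K ⊆ Icc (-κ) κ) {g : ℝ → ℝ} {y c : ℝ}
    (hg : ∀ x, |y - x| ≤ κ → g x = c) : convK K g y = c := by
  have : (fun s => K s * g (y - s)) = fun s => K s * c := by
    funext s
    by_cases hs : K s = 0
    · simp [hs]
    · rw [hg (y - s)]
      rw [sub_sub_cancel, abs_le]
      exact hKsupp (Function.mem_support.2 hs)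
  rw [convK, this, integral_mul_const, hKnorm, one_mul]

lemma convK_eq_of_eqOn_jump (hKint : Integrable K) (hKnorm : (∫ x, K x) = 1)
    (hKsupp : Function.support K ⊆ Icc (-κ) κ) {g : ℝ → ℝ} {y j p q : ℝ}
    (hg : ∀ x, |y - x| ≤ κ → g x = if j < x then q else p) :
    convK K g y = p + (q - p) * kernelCdf K (y - j) := by
  have : (fun s => K s * g (y - s)) =
      fun s => K s * p + (q - p) * (Iio (y - j)).indicator K s := by
    funext s
    by_cases hs : K s = 0
    · simp [hs, indicator_apply]
    · rw [hg (y - s)]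
      · by_cases h : s < y - j
        · rw [if_pos (by linarith), indicator_of_mem (mem_Iio.2 h)]
          ring
        · rw [if_neg (by linarith), indicator_of_notMem (by simpa using h)]
          ring
      · rw [sub_sub_cancel, abs_le]
        exact hKsupp (Function.mem_support.2 hs)
  rw [convK, this, integral_add (hKint.mul_const _)
    ((hKint.indicator measurableSet_Iio).const_mul _), integral_mul_const, hKnorm, one_mul,
    integral_const_mul, integral_indicator measurableSet_Iio, kernelCdf,
    integral_Iic_eq_integral_Iio]

end Kernel

section Step

lemma exists_mem_Ico_castSucc_succ {m : ℕ} {x : Fin (m + 1) → ℝ} {c : ℝ} (h0 : x 0 ≤ c)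
    (h1 : c < x (Fin.last m)) : ∃ l : Fin m, x l.castSucc ≤ c ∧ c < x l.succ := by
  by_contra! h
  exact absurd (Fin.induction (motive := fun i => x i ≤ c) h0 h (Fin.last m)) h1.not_ge

lemma stepF_eq {m : ℕ} {x : Fin (m + 1) → ℝ} (hx : StrictMono x) (a : Fin m → ℝ) {l : Fin m}
    {t : ℝ} (ht : t ∈ Ioo (x l.castSucc) (x l.succ)) : stepF x a t = a l := by
  rw [stepF, Finset.sum_eq_single l, indicator_of_mem ht]
  · intro k _ hk
    refine indicator_of_notMem (fun hkt => ?_) _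
    rcases lt_or_gt_of_ne hk with h | h
    · have := hx.monotone (Fin.succ_le_castSucc_iff.2 h)
      linarith [ht.1, hkt.2]
    · have := hx.monotone (Fin.succ_le_castSucc_iff.2 h)
      linarith [ht.2, hkt.1]
  · simp

lemma ae_mu01_iff {Q : ℝ → Prop} : (∀ᵐ t ∂mu01, Q t) ↔ ∀ᵐ t, t ∈ Icc (0 : ℝ) 1 → Q t :=
  ae_restrict_iff' measurableSet_Icc

lemma IsPCRep.exists_const {u : ℝ → ℝ} {m : ℕ} {x : Fin (m + 1) → ℝ} {a : Fin m → ℝ}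
    (h : IsPCRep u x a) {c d : ℝ} (hc : 0 ≤ c) (hcd : c < d) (hd : d ≤ 1)
    (hT : ∀ i, i ≠ 0 → i ≠ Fin.last m → x i ∉ Ioo c d) :
    ∃ z, ∀ᵐ t, t ∈ Ioo c d → u t = z := by
  obtain ⟨hx, h0, h1, hu⟩ := h
  obtain ⟨l, hl1, hl2⟩ := exists_mem_Ico_castSucc_succ (x := x) (c := c) (by linarith)
    (by linarith)
  have hl : d ≤ x l.succ := by
    by_cases hlast : l.succ = Fin.last m
    · rw [hlast, h1]
      exact hd
    · by_contra! hlt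
      exact hT _ (Fin.succ_ne_zero l) hlast ⟨hl2, hlt⟩
  refine ⟨a l, ?_⟩
  filter_upwards [ae_mu01_iff.1 hu] with t ht htm
  rw [ht ⟨by linarith [htm.1], by linarith [htm.2]⟩]
  exact stepF_eq hx a ⟨by linarith [htm.1], by linarith [htm.2]⟩

lemma exists_cell {Y : Finset ℝ} (h0 : (0 : ℝ) ∈ Y) (h1 : (1 : ℝ) ∈ Y) {t : ℝ}
    (ht : t ∈ Icc (0 : ℝ) 1) (htY : t ∉ Y) :
    ∃ a ∈ Y, ∃ b ∈ Y, (∀ c ∈ Y, c ≤ a ∨ b ≤ c) ∧ t ∈ Ioo a b := by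
  have hne1 : (Y.filter (· < t)).Nonempty := ⟨0, Finset.mem_filter.2
    ⟨h0, lt_of_le_of_ne ht.1 fun h => htY (h ▸ h0)⟩⟩
  have hne2 : (Y.filter (t < ·)).Nonempty := ⟨1, Finset.mem_filter.2
    ⟨h1, lt_of_le_of_ne ht.2 fun h => htY (h ▸ h1)⟩⟩
  have ha := Finset.mem_filter.1 (Finset.max'_mem _ hne1)
  have hb := Finset.mem_filter.1 (Finset.min'_mem _ hne2)
  refine ⟨_, ha.1, _, hb.1, fun c hc => ?_, ha.2, hb.2⟩
  rcases lt_trichotomy c t with h | h | h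
  · exact Or.inl (Finset.le_max' _ _ (Finset.mem_filter.2 ⟨hc, h⟩))
  · exact absurd (h ▸ hc) htY
  · exact Or.inr (Finset.min'_le _ _ (Finset.mem_filter.2 ⟨hc, h⟩))

lemma ae_notMem_finset (Y : Finset ℝ) : ∀ᵐ t : ℝ, t ∉ Y :=
  compl_mem_ae_iff.2 (Y.measure_zero volume)

lemma integrableOn_of_const_on_cells {Y : Finset ℝ} (h0 : (0 : ℝ) ∈ Y) (h1 : (1 : ℝ) ∈ Y)
    {u : ℝ → ℝ} (hu : ∀ a ∈ Y, ∀ b ∈ Y, a < b → (∀ c ∈ Y, c ≤ a ∨ b ≤ c) →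
      ∃ z, ∀ᵐ t, t ∈ Ioo a b → u t = z) : IntegrableOn u (Icc (0 : ℝ) 1) := by
  set C := (Y ×ˢ Y).filter fun ab => ab.1 < ab.2 ∧ ∀ c ∈ Y, c ≤ ab.1 ∨ ab.2 ≤ c with hC
  have hInt : IntegrableOn u (⋃ ab ∈ C, Ioo ab.1 ab.2) := by
    rw [integrableOn_finset_iUnion]
    rintro ⟨a, b⟩ hab
    rw [hC, Finset.mem_filter, Finset.mem_product] at hab
    obtain ⟨z, hz⟩ := hu a hab.1.1 b hab.1.2 hab.2.1 hab.2.2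
    exact (integrableOn_const (C := z) measure_Ioo_lt_top.ne).congr_fun_ae
      (((ae_restrict_iff' measurableSet_Ioo).2 hz).mono fun t ht => ht.symm)
  have hYint : IntegrableOn u (Y : Set ℝ) :=
    IntegrableOn.of_measure_zero (Y.measure_zero volume)
  refine (hInt.union hYint).mono_set fun t ht => ?_
  by_cases htY : t ∈ Y
  · exact Or.inr htY
  · obtain ⟨a, ha, b, hb, hab, htab⟩ := exists_cell h0 h1 ht htY
    refine Or.inl (mem_iUnion₂.2 ⟨(a, b), ?_, htab⟩)
    rw [hC, Finset.mem_filter, Finset.mem_product]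
    exact ⟨⟨ha, hb⟩, htab.1.trans htab.2, hab⟩

lemma IsPCRep.integrableOn {u : ℝ → ℝ} {m : ℕ} {x : Fin (m + 1) → ℝ} {a : Fin m → ℝ}
    (h : IsPCRep u x a) : IntegrableOn u (Icc (0 : ℝ) 1) := by
  have hx01 : ∀ i, x i ∈ Icc (0 : ℝ) 1 := fun i =>
    ⟨h.2.1 ▸ h.1.monotone (Fin.zero_le i), h.2.2.1 ▸ h.1.monotone (Fin.le_last i)⟩
  refine integrableOn_of_const_on_cells (Y := Finset.univ.image x)
    (Finset.mem_image.2 ⟨0, Finset.mem_univ _, h.2.1⟩)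
    (Finset.mem_image.2 ⟨Fin.last m, Finset.mem_univ _, h.2.2.1⟩) fun c hc d hd hcd hcell => ?_
  obtain ⟨i, -, rfl⟩ := Finset.mem_image.1 hc
  obtain ⟨k, -, rfl⟩ := Finset.mem_image.1 hd
  refine h.exists_const (hx01 i).1 hcd (hx01 k).2 fun l _ _ hl => ?_
  rcases hcell (x l) (Finset.mem_image_of_mem _ (Finset.mem_univ _)) with h | h
  · exact absurd hl.1 h.not_gt
  · exact absurd hl.2 h.not_gt

variable {n : ℕ}

lemma stepOn_congr {s s' : Fin n → ℝ} {t t' : ℝ} (α : Fin (n + 1) → ℝ)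
    (h : ∀ i, s i < t ↔ s' i < t') : stepOn s α t = stepOn s' α t' := by
  simp only [stepOn, h]

lemma stepOn_eq {s : Fin n → ℝ} {t : ℝ} (α : Fin (n + 1) → ℝ) (c : Fin (n + 1))
    (h : ∀ i, s i < t ↔ (i : ℕ) < c) : stepOn s α t = α c := by
  have hcard : (Finset.univ.filter fun i : Fin n => (i : ℕ) < c).card = c := by
    rw [Fin.card_filter_val_lt]
    exact min_eq_right (by omega)
  simp only [stepOn, h, hcard]

lemma stepOn_eq_ite {s : Fin n → ℝ} {t : ℝ} (α : Fin (n + 1) → ℝ) (i : Fin n)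
    (hlt : ∀ k < i, s k < t) (hgt : ∀ k, i < k → t ≤ s k) :
    stepOn s α t = if s i < t then α i.succ else α i.castSucc := by
  have key : ∀ k : Fin n, k ≠ i → (s k < t ↔ k < i) := fun k hk => by
    rcases lt_or_gt_of_ne hk with h | h
    · exact iff_of_true (hlt k h) h
    · exact iff_of_false (hgt k h).not_gt h.not_gt
  split_ifs with h
  · refine stepOn_eq α _ fun k => ?_
    rcases eq_or_ne k i with rfl | hk
    · simpa using h
    · rw [key k hk, Fin.lt_def, Fin.val_succ]
      have : (k : ℕ) ≠ i := fun h => hk (Fin.ext h)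
      omega
  · refine stepOn_eq α _ fun k => ?_
    rcases eq_or_ne k i with rfl | hk
    · simpa using h
    · rw [key k hk, Fin.lt_def, Fin.val_castSucc]

lemma jext_castSucc_succ (j : Fin (n + 1) → ℝ) (i : Fin (n + 1)) :
    jext j i.succ.castSucc = j i := by
  simp only [jext, ← Fin.succ_castSucc, Fin.cons_succ, Fin.snoc_castSucc]

lemma jext_zero (j : Fin (n + 1) → ℝ) : jext j 0 = 0 := rfl

lemma jext_last (j : Fin (n + 1) → ℝ) : jext j (Fin.last (n + 2)) = 1 := by
  rw [jext, ← Fin.succ_last, Fin.cons_succ, Fin.snoc_last]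

lemma jext_strictMono {s : Fin (n + 1) → ℝ} (hs : StrictMono s) (h0 : 0 < s 0)
    (h1 : s (Fin.last n) < 1) : StrictMono (jext s) := by
  refine Fin.strictMono_iff_lt_succ.2 fun i => ?_
  refine Fin.cases ?_ (fun k => ?_) i
  · have : (0 : Fin (n + 2)).succ = (0 : Fin (n + 1)).succ.castSucc := rfl
    rw [this, jext_castSucc_succ, Fin.castSucc_zero, jext_zero]
    exact h0
  · rw [jext_castSucc_succ]
    refine Fin.lastCases ?_ (fun l => ?_) k
    · rw [Fin.succ_last, Fin.succ_last, jext_last]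
      exact h1
    · rw [Fin.succ_castSucc, Fin.succ_castSucc, jext_castSucc_succ]
      exact hs Fin.castSucc_lt_succ

lemma isPCRep_stepOn {s : Fin (n + 1) → ℝ} (hs : StrictMono s) (h0 : 0 < s 0)
    (h1 : s (Fin.last n) < 1) (α : Fin (n + 2) → ℝ) : IsPCRep (stepOn s α) (jext s) α := by
  have hm := jext_strictMono hs h0 h1
  refine ⟨hm, jext_zero s, jext_last s, ae_mu01_iff.2 ?_⟩
  filter_upwards [ae_notMem_finset (Finset.univ.image (jext s))] with t ht ht01
  have hne : ∀ i, jext s i ≠ t := fun i hi =>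
    ht (Finset.mem_image.2 ⟨i, Finset.mem_univ _, hi⟩)
  obtain ⟨l, hl1, hl2⟩ := exists_mem_Ico_castSucc_succ (x := jext s) (c := t)
    (by rw [jext_zero]; exact ht01.1)
    (lt_of_le_of_ne (by rw [jext_last]; exact ht01.2) (hne _).symm)
  rw [stepF_eq hm α ⟨lt_of_le_of_ne hl1 (hne _), hl2⟩]
  refine stepOn_eq α l fun i => ?_
  rw [← jext_castSucc_succ s i]
  constructor
  · intro h
    by_contra! hli
    have : l.succ ≤ i.succ.castSucc := by
      rw [Fin.le_def]
      simp only [Fin.val_succ, Fin.val_castSucc]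
      omega
    exact absurd (hm.monotone this) (by linarith)
  · intro h
    have : i.succ.castSucc ≤ l.castSucc := by
      rw [Fin.le_def]
      simp only [Fin.val_succ, Fin.val_castSucc]
      omega
    exact lt_of_le_of_ne ((hm.monotone this).trans hl1) (hne _)

lemma lmin_le (j : Fin (n + 1) → ℝ) (i : Fin (n + 2)) :
    lmin j ≤ jext j i.succ - jext j i.castSucc :=
  Finset.inf'_le _ (Finset.mem_univ i)

lemma lmin_pos {j : Fin (n + 1) → ℝ} (hj : StrictMono j) (h0 : 0 < j 0)
    (h1 : j (Fin.last n) < 1) : 0 < lmin j := by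
  rw [lmin, Finset.lt_inf'_iff]
  exact fun i _ => sub_pos.2 (jext_strictMono hj h0 h1 Fin.castSucc_lt_succ)

lemma lmin_le_jext_sub {j : Fin (n + 1) → ℝ} (hj : StrictMono j) (h0 : 0 < j 0)
    (h1 : j (Fin.last n) < 1) {i k : Fin (n + 3)} (hik : i < k) :
    lmin j ≤ jext j k - jext j i := by
  obtain ⟨l, rfl⟩ : ∃ l : Fin (n + 2), i = l.castSucc :=
    ⟨i.castPred (Fin.ne_last_of_lt hik), by simp⟩
  have := (jext_strictMono hj h0 h1).monotone (Fin.castSucc_lt_iff_succ_le.1 hik)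
  linarith [lmin_le j l]

lemma lmin_le_sub {j : Fin (n + 1) → ℝ} (hj : StrictMono j) (h0 : 0 < j 0)
    (h1 : j (Fin.last n) < 1) {i k : Fin (n + 1)} (hik : i < k) : lmin j ≤ j k - j i := by
  rw [← jext_castSucc_succ j i, ← jext_castSucc_succ j k]
  exact lmin_le_jext_sub hj h0 h1 (by simpa using hik)

lemma lmin_le_apply {j : Fin (n + 1) → ℝ} (hj : StrictMono j) (h0 : 0 < j 0)
    (h1 : j (Fin.last n) < 1) (i : Fin (n + 1)) : lmin j ≤ j i ∧ lmin j ≤ 1 - j i := by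
  have ha := lmin_le_jext_sub hj h0 h1 (i := 0) (k := i.succ.castSucc)
    (by rw [Fin.lt_def]; simp)
  have hb := lmin_le_jext_sub hj h0 h1 (i := i.succ.castSucc) (k := Fin.last _)
    (Fin.castSucc_lt_last _)
  rw [jext_castSucc_succ, jext_zero, sub_zero] at ha
  rw [jext_castSucc_succ, jext_last] at hb
  exact ⟨ha, hb⟩

end Step

section Data

variable {n : ℕ}

/-- `f` is constant on the cells of `X`, agrees with the step function `stepOn j α` at distance
at least `r` from all jumps, and near the jump `j i` is a convex combination of the two adjacent
values whose weight is governed by the position of the midpoint of the cell. -/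
structure IsJumpData (j : Fin (n + 1) → ℝ) (α : Fin (n + 2) → ℝ) (r δ : ℝ) (X : Finset ℝ)
    (f : ℝ → ℝ) : Prop where
  const : ∀ a ∈ X, ∀ b ∈ X, a < b → (∀ c ∈ X, c ≤ a ∨ b ≤ c) → ∃ z, ∀ t ∈ Ioo a b, f t = z
  plateau : ∀ t ∈ Icc (0 : ℝ) 1, t ∉ X → (∀ i, r ≤ |t - j i|) → f t = stepOn j α t
  weight : ∀ i, ∀ a ∈ X, ∀ b ∈ X, (∀ c ∈ X, c ≤ a ∨ b ≤ c) → ∀ t ∈ Ioo a b, |t - j i| < r →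
    ∃ w, f t = α i.castSucc + (α i.succ - α i.castSucc) * w ∧ 0 ≤ w ∧ w ≤ 1 ∧
      (2 * j i ≤ a + b → 1 / 2 ≤ w) ∧ (2 * j i < a + b → 1 / 2 < w) ∧
      (a + b ≤ 2 * j i → w ≤ 1 / 2) ∧ (a + b < 2 * j i → w < 1 / 2) ∧
      (t < j i - δ → w = 0) ∧ (j i + δ < t → w = 1)

lemma sampled_value {X : Finset ℝ} {F f : ℝ → ℝ}
    (hf : IntegralSampled (X : Set ℝ) F f ∨ PointSampled (X : Set ℝ) F f) {a b : ℝ}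
    (ha : a ∈ X) (hb : b ∈ X) (hab : a < b) (hcell : ∀ c ∈ X, c ≤ a ∨ b ≤ c) :
    (∀ t ∈ Ioo a b, f t = (b - a)⁻¹ * ∫ s in Ioo a b, F s) ∨
      ∀ t ∈ Ioo a b, f t = F ((a + b) / 2) := by
  have hempty : Ioo a b ∩ (X : Set ℝ) = ∅ := by
    rw [eq_empty_iff_forall_notMem]
    rintro c ⟨hc, hcX⟩
    rcases hcell c hcX with h | h
    · exact hc.1.not_ge h
    · exact hc.2.not_ge h
  have hmem : ∀ x ∈ X, x ∈ insert (0 : ℝ) (insert 1 (X : Set ℝ)) := fun x hx =>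
    Or.inr (Or.inr hx)
  exact hf.imp (fun h => h a b (hmem a ha) (hmem b hb) hab hempty)
    (fun h => h a b (hmem a ha) (hmem b hb) hab hempty)

lemma isJumpData_of_sampled {j : Fin (n + 1) → ℝ} {α : Fin (n + 2) → ℝ} {r κ η : ℝ}
    (hsep : ∀ i k, i < k → 2 * r ≤ j k - j i) (hκη : κ + η < r)
    {K : ℝ → ℝ} (hKint : Integrable K) (hKpos : ∀ x, 0 ≤ K x)
    (hKsym : ∀ x, K (-x) = K x) (hKnorm : (∫ x, K x) = 1)
    (hKsupp : Function.support K ⊆ Icc (-κ) κ)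
    (hKpos0 : ∃ ε > 0, ∀ x : ℝ, |x| < ε → 0 < K x)
    {X : Finset ℝ} (hX0 : (0 : ℝ) ∈ X) (hX1 : (1 : ℝ) ∈ X)
    (hmesh : ∀ a ∈ X, ∀ b ∈ X, a < b → (∀ c ∈ X, c ≤ a ∨ b ≤ c) → b - a ≤ η) {f : ℝ → ℝ}
    (hf : IntegralSampled (X : Set ℝ) (convK K (stepOn j α)) f ∨
      PointSampled (X : Set ℝ) (convK K (stepOn j α)) f) :
    IsJumpData j α r (κ + η) X f where
  const a ha b hb hab hcell := by
    rcases sampled_value hf ha hb hab hcell with h | h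
    · exact ⟨_, h⟩
    · exact ⟨_, h⟩
  plateau t ht htX hfar := by
    obtain ⟨a, ha, b, hb, hcell, htab⟩ := exists_cell hX0 hX1 ht htX
    have hab : a < b := htab.1.trans htab.2
    have hη := hmesh a ha b hb hab hcell
    have hF : ∀ y ∈ Icc a b, convK K (stepOn j α) y = stepOn j α t := fun y hy =>
      convK_eq_of_eqOn_const hKnorm hKsupp fun x hx => stepOn_congr α fun i => by
        obtain ⟨h1, h2⟩ := abs_le.1 hx
        have h3 := hfar i
        rcases le_abs.1 h3 with h | h
        · exact iff_of_true (by linarith [htab.1, htab.2, hy.1, hy.2])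
            (by linarith [htab.1, htab.2, hy.1, hy.2])
        · exact iff_of_false (by linarith [htab.1, htab.2, hy.1, hy.2])
            (by linarith [htab.1, htab.2, hy.1, hy.2])
    rcases sampled_value hf ha hb hab hcell with h | h
    · rw [h t htab, setIntegral_congr_fun (g := fun _ => stepOn j α t) measurableSet_Ioo
        fun y hy => hF y (Ioo_subset_Icc_self hy), setIntegral_const,
        Real.volume_real_Ioo_of_le hab.le, smul_eq_mul, inv_mul_cancel_left₀ (by linarith)]
    · rw [h t htab]
      exact hF _ ⟨by linarith, by linarith⟩
  weight i a ha b hb hcell t htab hti := by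
    have hab : a < b := htab.1.trans htab.2
    have hη := hmesh a ha b hb hab hcell
    obtain ⟨ht1, ht2⟩ := abs_lt.1 hti
    have hF : ∀ y ∈ Icc a b, convK K (stepOn j α) y =
        α i.castSucc + (α i.succ - α i.castSucc) * kernelCdf K (y - j i) := fun y hy =>
      convK_eq_of_eqOn_jump hKint hKnorm hKsupp fun x hx => by
        obtain ⟨h1, h2⟩ := abs_le.1 hx
        refine stepOn_eq_ite α i (fun k hk => ?_) fun k hk => ?_
        · linarith [hsep k i hk, htab.1, htab.2, hy.1, hy.2]
        · linarith [hsep i k hk, htab.1, htab.2, hy.1, hy.2]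
    obtain ⟨w, h1, h2, h3, h4, h5, h6, h7, h8, h9⟩ := exists_sample_weight hKint hKpos hKsym
      hKnorm hKsupp hKpos0 hab hF (z := f t)
      ((sampled_value hf ha hb hab hcell).imp (fun h => h t htab) fun h => h t htab)
    exact ⟨w, h1, h2, h3, h4, h5, h6, h7, fun h => h8 (by linarith [htab.1]),
      fun h => h9 (by linarith [htab.2])⟩

variable {j : Fin (n + 1) → ℝ} {α : Fin (n + 2) → ℝ} {r δ : ℝ} {X : Finset ℝ} {f : ℝ → ℝ}

lemma IsJumpData.integrableOn (hf : IsJumpData j α r δ X f) (hX0 : (0 : ℝ) ∈ X)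
    (hX1 : (1 : ℝ) ∈ X) : IntegrableOn f (Icc (0 : ℝ) 1) :=
  integrableOn_of_const_on_cells hX0 hX1 fun a ha b hb hab hcell =>
    (hf.const a ha b hb hab hcell).imp fun _ hz => Eventually.of_forall hz

lemma abs_sub_convexComb {p q z w : ℝ} (hz : z = p + (q - p) * w) (h0 : 0 ≤ w) (h1 : w ≤ 1) :
    |p - z| = |q - p| * w ∧ |q - z| = |q - p| * (1 - w) := by
  constructor
  · rw [show p - z = -((q - p) * w) by rw [hz]; ring, abs_neg, abs_mul, abs_of_nonneg h0]
  · rw [show q - z = (q - p) * (1 - w) by rw [hz]; ring, abs_mul, abs_of_nonneg (sub_nonneg.2 h1)]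

lemma IsJumpData.abs_sub_add (hf : IsJumpData j α r δ X f) (hX0 : (0 : ℝ) ∈ X)
    (hX1 : (1 : ℝ) ∈ X) (i : Fin (n + 1)) {t : ℝ} (ht : t ∈ Icc (0 : ℝ) 1) (htX : t ∉ X)
    (hti : |t - j i| < r) :
    |α i.castSucc - f t| + |α i.succ - f t| = |α i.succ - α i.castSucc| ∧
      (t < j i - δ → f t = α i.castSucc) ∧ (j i + δ < t → f t = α i.succ) := by
  obtain ⟨a, ha, b, hb, hcell, htab⟩ := exists_cell hX0 hX1 ht htX
  obtain ⟨w, h1, h2, h3, -, -, -, -, h8, h9⟩ := hf.weight i a ha b hb hcell t htab hti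
  obtain ⟨e1, e2⟩ := abs_sub_convexComb h1 h2 h3
  refine ⟨by rw [e1, e2]; ring, fun h => ?_, fun h => ?_⟩
  · rw [h1, h8 h]; ring
  · rw [h1, h9 h]; ring

/-- Choosing the jump at a nearest neighbour of `j i` in `X` selects at each point the plateau
value nearer to the data. -/
lemma IsJumpData.nearest_value (hf : IsJumpData j α r δ X f) (hX0 : (0 : ℝ) ∈ X)
    (hX1 : (1 : ℝ) ∈ X) (i : Fin (n + 1)) {s : ℝ} (hsX : s ∈ X)
    (hs : ∀ p ∈ X, |j i - s| ≤ |j i - p|) {t : ℝ} (ht : t ∈ Icc (0 : ℝ) 1) (htX : t ∉ X)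
    (hti : |t - j i| < r) :
    |(if s < t then α i.succ else α i.castSucc) - f t| ≤ |α i.castSucc - f t| ∧
      |(if s < t then α i.succ else α i.castSucc) - f t| ≤ |α i.succ - f t| := by
  obtain ⟨a, ha, b, hb, hcell, htab⟩ := exists_cell hX0 hX1 ht htX
  obtain ⟨w, h1, h2, h3, h4, -, h6, -, -, -⟩ := hf.weight i a ha b hb hcell t htab hti
  obtain ⟨e1, e2⟩ := abs_sub_convexComb h1 h2 h3
  have hh := abs_nonneg (α i.succ - α i.castSucc)
  split_ifs with hst
  · have hsa : s ≤ a := (hcell s hsX).resolve_right fun h => by linarith [htab.2]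
    have hsb := hs b hb
    have : 2 * j i ≤ a + b := by
      rcases abs_cases (j i - s) with h | h <;> rcases abs_cases (j i - b) with h' | h' <;>
        linarith [htab.1, htab.2]
    have := h4 this
    rw [e1, e2]
    exact ⟨mul_le_mul_of_nonneg_left (by linarith) hh, le_rfl⟩
  · have hsb : b ≤ s := (hcell s hsX).resolve_left fun h => by
      exact hst (by linarith [htab.1])
    have hsa := hs a ha
    have : a + b ≤ 2 * j i := by
      rcases abs_cases (j i - s) with h | h <;> rcases abs_cases (j i - a) with h' | h' <;>
        linarith [htab.1, htab.2]
    have := h6 this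
    rw [e1, e2]
    exact ⟨le_rfl, mul_le_mul_of_nonneg_left (by linarith) hh⟩

lemma exists_mem_Ioo_of_ae {a b : ℝ} (hab : a < b) {Q : ℝ → Prop} (hQ : ∀ᵐ t, Q t) :
    ∃ t ∈ Ioo a b, Q t := by
  by_contra! h
  have : volume (Ioo a b) = 0 := measure_mono_null (fun t ht => h t ht) (ae_iff.1 hQ)
  rw [Real.volume_Ioo, ENNReal.ofReal_eq_zero] at this
  linarith

/-- A jump position in `X` at which the plateau values are split as favourably as by the nearest
neighbour `s` is itself a nearest neighbour. -/
lemma IsJumpData.isNearest_of_abs_le (hf : IsJumpData j α r δ X f) (i : Fin (n + 1))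
    (hadj : α i.castSucc ≠ α i.succ) {x : ℝ} (hxX : x ∈ X) (hx : |x - j i| < r)
    (hle : ∀ᵐ t, |t - j i| < r →
      (t < x → |α i.castSucc - f t| ≤ |α i.succ - f t|) ∧
      (x < t → |α i.succ - f t| ≤ |α i.castSucc - f t|)) :
    ∀ p ∈ X, |j i - x| ≤ |j i - p| := by
  intro p hp
  by_contra! hlt
  have hh : 0 < |α i.succ - α i.castSucc| := abs_pos.2 (sub_ne_zero.2 hadj.symm)
  obtain ⟨hx1, hx2⟩ := abs_lt.1 hx
  rcases lt_trichotomy p x with hpx | rfl | hpx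
  · have hne : (X.filter (· < x)).Nonempty := ⟨p, Finset.mem_filter.2 ⟨hp, hpx⟩⟩
    obtain ⟨a, ha⟩ : ∃ a, a = (X.filter (· < x)).max' hne := ⟨_, rfl⟩
    obtain ⟨haX, hax⟩ := Finset.mem_filter.1 (ha ▸ Finset.max'_mem _ hne)
    have hcell : ∀ c ∈ X, c ≤ a ∨ x ≤ c := fun c hc => by
      rcases lt_or_ge c x with h | h
      · exact Or.inl (ha ▸ Finset.le_max' _ _ (Finset.mem_filter.2 ⟨hc, h⟩))
      · exact Or.inr h
    have hpa : p ≤ a := (hcell p hp).resolve_right hpx.not_ge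
    have hmid : 2 * j i < a + x := by
      rcases abs_cases (j i - p) with h | h <;> rcases abs_cases (j i - x) with h' | h' <;>
        linarith
    obtain ⟨t, ht, htle⟩ := exists_mem_Ioo_of_ae
      (show max a (j i - r) < x from max_lt hax (by linarith)) hle
    have hta : a < t := (le_max_left _ _).trans_lt ht.1
    have hti : |t - j i| < r :=
      abs_lt.2 ⟨by linarith [(le_max_right a (j i - r)).trans_lt ht.1], by linarith [ht.2]⟩
    obtain ⟨w, h1, h2, h3, -, h5, -⟩ := hf.weight i a haX x hxX hcell t ⟨hta, ht.2⟩ hti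
    obtain ⟨e1, e2⟩ := abs_sub_convexComb h1 h2 h3
    have hcontra := (htle hti).1 ht.2
    rw [e1, e2] at hcontra
    linarith [h5 hmid, le_of_mul_le_mul_left hcontra hh]
  · exact lt_irrefl _ hlt
  · have hne : (X.filter (x < ·)).Nonempty := ⟨p, Finset.mem_filter.2 ⟨hp, hpx⟩⟩
    obtain ⟨b, hb⟩ : ∃ b, b = (X.filter (x < ·)).min' hne := ⟨_, rfl⟩
    obtain ⟨hbX, hxb⟩ := Finset.mem_filter.1 (hb ▸ Finset.min'_mem _ hne)
    have hcell : ∀ c ∈ X, c ≤ x ∨ b ≤ c := fun c hc => by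
      rcases le_or_gt c x with h | h
      · exact Or.inl h
      · exact Or.inr (hb ▸ Finset.min'_le _ _ (Finset.mem_filter.2 ⟨hc, h⟩))
    have hbp : b ≤ p := (hcell p hp).resolve_left hpx.not_ge
    have hmid : x + b < 2 * j i := by
      rcases abs_cases (j i - p) with h | h <;> rcases abs_cases (j i - x) with h' | h' <;>
        linarith
    obtain ⟨t, ht, htle⟩ := exists_mem_Ioo_of_ae
      (show x < min b (j i + r) from lt_min hxb (by linarith)) hle
    have htb : t < b := ht.2.trans_le (min_le_left _ _)
    have hti : |t - j i| < r :=
      abs_lt.2 ⟨by linarith [ht.1], by linarith [ht.2.trans_le (min_le_right b (j i + r))]⟩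
    obtain ⟨w, h1, h2, h3, -, -, -, h7, -⟩ := hf.weight i x hxX b hbX hcell t ⟨ht.1, htb⟩ hti
    obtain ⟨e1, e2⟩ := abs_sub_convexComb h1 h2 h3
    have hcontra := (htle hti).2 ht.1
    rw [e1, e2] at hcontra
    linarith [h7 hmid, le_of_mul_le_mul_left hcontra hh]

end Data

section Global

lemma IsPCIn.exists_finset_jumps {u : ℝ → ℝ} {S : Set ℝ} (hu : IsPCIn u S) :
    ∃ T : Finset ℝ, T.card ≤ jumps u ∧ ∀ c d, 0 ≤ c → c < d → d ≤ 1 →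
      (∀ z ∈ T, z ∉ Ioo c d) → ∃ z, ∀ᵐ t, t ∈ Ioo c d → u t = z := by
  have hne : {jj : ℕ | ∃ (x : Fin (jj + 2) → ℝ) (a : Fin (jj + 1) → ℝ),
      IsPCRep u x a}.Nonempty := by
    obtain ⟨m, x, a, h, -⟩ := hu
    rcases m with _ | m
    · have h0 := h.2.1
      have h1 := h.2.2.1
      rw [show Fin.last 0 = 0 from rfl, h0] at h1
      norm_num at h1
    · exact ⟨m, x, a, h⟩
  obtain ⟨x, a, h⟩ : ∃ (x : Fin (jumps u + 2) → ℝ) (a : Fin (jumps u + 1) → ℝ),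
      IsPCRep u x a := Nat.sInf_mem hne
  refine ⟨Finset.univ.image fun i : Fin (jumps u) => x i.succ.castSucc,
    Finset.card_image_le.trans (by simp), fun c d hc hcd hd hT => ?_⟩
  refine h.exists_const hc hcd hd fun i hi0 hil => ?_
  obtain ⟨i, rfl⟩ : ∃ k : Fin (jumps u + 1), i = k.castSucc := ⟨i.castPred hil, by simp⟩
  obtain ⟨i, rfl⟩ : ∃ k : Fin (jumps u), i = k.succ :=
    ⟨i.pred fun h => hi0 (by rw [h]; rfl), by simp⟩
  exact hT _ (Finset.mem_image.2 ⟨i, Finset.mem_univ _, rfl⟩)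

lemma IsPCIn.integrableOn {u : ℝ → ℝ} {S : Set ℝ} (hu : IsPCIn u S) :
    IntegrableOn u (Icc (0 : ℝ) 1) := by
  obtain ⟨m, x, a, h, -⟩ := hu
  exact h.integrableOn

lemma IsPCIn.exists_const {u : ℝ → ℝ} {S : Set ℝ} (hu : IsPCIn u S) {c d : ℝ} (hc : 0 ≤ c)
    (hcd : c < d) (hd : d ≤ 1) (hS : Disjoint S (Ioo c d)) :
    ∃ z, ∀ᵐ t, t ∈ Ioo c d → u t = z := by
  obtain ⟨m, x, a, h, hx⟩ := hu
  exact h.exists_const hc hcd hd fun i h0 h1 => disjoint_left.1 hS (hx i h0 h1)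

/-- A jump of a function that is piecewise constant with jumps in `X` lies in `X`. -/
lemma IsPCIn.mem_of_jump {u : ℝ → ℝ} {X : Finset ℝ} (hu : IsPCIn u (X : Set ℝ)) {a b x p q : ℝ}
    (ha : 0 ≤ a) (hb : b ≤ 1) (hx : x ∈ Ioo a b) (hp : ∀ᵐ t, t ∈ Ioo a x → u t = p)
    (hq : ∀ᵐ t, t ∈ Ioo x b → u t = q) (hpq : p ≠ q) : x ∈ X := by
  by_contra hxX
  obtain ⟨ε, hε, hball⟩ := Metric.isOpen_iff.1
    ((X.finite_toSet.isClosed.isOpen_compl).inter isOpen_Ioo) x ⟨hxX, hx⟩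
  rw [Real.ball_eq_Ioo] at hball
  have ha' : a ≤ x - ε / 2 :=
    (hball (show x - ε / 2 ∈ Ioo (x - ε) (x + ε) from ⟨by linarith, by linarith⟩)).2.1.le
  have hb' : x + ε / 2 ≤ b :=
    (hball (show x + ε / 2 ∈ Ioo (x - ε) (x + ε) from ⟨by linarith, by linarith⟩)).2.2.le
  obtain ⟨z, hz⟩ := hu.exists_const (c := x - ε / 2) (d := x + ε / 2) (by linarith)
    (by linarith) (by linarith) (disjoint_left.2 fun t htX ht =>
      (hball ⟨by linarith [ht.1], by linarith [ht.2]⟩).1 htX)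
  obtain ⟨t, ht, h1, h2⟩ := exists_mem_Ioo_of_ae (show x - ε / 2 < x by linarith) (hz.and hp)
  obtain ⟨t', ht', h1', h2'⟩ := exists_mem_Ioo_of_ae (show x < x + ε / 2 by linarith) (hz.and hq)
  apply hpq
  rw [← h2 ⟨by linarith [ht.1], ht.2⟩, h1 ⟨ht.1, by linarith [ht.2]⟩,
    ← h2' ⟨ht'.1, by linarith [ht'.2]⟩, h1' ⟨by linarith [ht'.1], ht'.2⟩]

variable {n : ℕ} {j : Fin (n + 1) → ℝ} {α : Fin (n + 2) → ℝ} {r δ γ : ℝ} {X : Finset ℝ}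
  {f : ℝ → ℝ} {s : Fin (n + 1) → ℝ}

lemma mem_window_iff {c t : ℝ} : t ∈ Ioo (c - r) (c + r) ↔ |t - c| < r := by
  rw [abs_lt, mem_Ioo]
  constructor <;> rintro ⟨h1, h2⟩ <;> constructor <;> linarith

lemma pairwise_disjoint_window (hsep : ∀ i k, i < k → 2 * r ≤ j k - j i) :
    Pairwise (Function.onFun Disjoint fun i => Ioo (j i - r) (j i + r)) := by
  intro i k hik
  refine disjoint_left.2 fun t h1 h2 => ?_
  rcases lt_or_gt_of_ne hik with h | h
  · linarith [hsep i k h, h1.2, h2.1]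
  · linarith [hsep k i h, h1.1, h2.2]

lemma stepOn_window (hsep : ∀ i k, i < k → 2 * r ≤ j k - j i) (hsr : ∀ i, |s i - j i| < r)
    {i : Fin (n + 1)} {t : ℝ} (ht : |t - j i| < r) :
    stepOn s α t = if s i < t then α i.succ else α i.castSucc := by
  obtain ⟨h1, h2⟩ := abs_lt.1 ht
  refine stepOn_eq_ite α i (fun k hk => ?_) fun k hk => ?_
  · linarith [hsep k i hk, (abs_lt.1 (hsr k)).2]
  · linarith [hsep i k hk, (abs_lt.1 (hsr k)).1]

lemma stepOn_eq_of_far (hsr : ∀ i, |s i - j i| < r) {t : ℝ} (ht : ∀ i, r ≤ |t - j i|) :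
    stepOn s α t = stepOn j α t := by
  refine stepOn_congr α fun i => ?_
  obtain ⟨h1, h2⟩ := abs_lt.1 (hsr i)
  rcases le_abs.1 (ht i) with h | h
  · exact iff_of_true (by linarith) (by linarith [abs_nonneg (s i - j i), hsr i])
  · exact iff_of_false (by linarith) (by linarith [abs_nonneg (s i - j i), hsr i])

lemma integral_mu01_split (hsep : ∀ i k, i < k → 2 * r ≤ j k - j i)
    (hend : ∀ i, r ≤ j i ∧ r ≤ 1 - j i) {F : ℝ → ℝ} (hF : IntegrableOn F (Icc (0 : ℝ) 1)) :
    ∫ t, F t ∂mu01 = (∑ i, ∫ t in Ioo (j i - r) (j i + r), F t) +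
      ∫ t in Icc 0 1 \ ⋃ i, Ioo (j i - r) (j i + r), F t := by
  have hsub : ∀ i, Ioo (j i - r) (j i + r) ⊆ Icc (0 : ℝ) 1 := fun i t ht =>
    ⟨by linarith [ht.1, (hend i).1], by linarith [ht.2, (hend i).2]⟩
  rw [← integral_iUnion_fintype (fun i => measurableSet_Ioo) (pairwise_disjoint_window hsep)
    fun i => hF.mono_set (hsub i),
    setIntegral_sdiff (MeasurableSet.iUnion fun i => measurableSet_Ioo) hF (iUnion_subset hsub)]
  simp [mu01]

lemma sum_card_filter_window_le (hsep : ∀ i k, i < k → 2 * r ≤ j k - j i) (T : Finset ℝ) :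
    ∑ i, (T.filter (· ∈ Ioo (j i - r) (j i + r))).card ≤ T.card := by
  rw [← Finset.card_biUnion]
  · exact Finset.card_le_card (Finset.biUnion_subset.2 fun i _ => Finset.filter_subset _ _)
  · intro i _ k _ hik
    refine Finset.disjoint_left.2 fun t h1 h2 => ?_
    exact disjoint_left.1 (pairwise_disjoint_window hsep hik) (Finset.mem_filter.1 h1).2
      (Finset.mem_filter.1 h2).2

lemma strictMono_of_near (hsep : ∀ i k, i < k → 2 * r ≤ j k - j i)
    (hsr : ∀ i, |s i - j i| < r) : StrictMono s := fun i k hik => by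
  linarith [hsep i k hik, (abs_lt.1 (hsr i)).2, (abs_lt.1 (hsr k)).1]

lemma isPCRep_stepOn_of_near (hsep : ∀ i k, i < k → 2 * r ≤ j k - j i)
    (hend : ∀ i, r ≤ j i ∧ r ≤ 1 - j i) (hsr : ∀ i, |s i - j i| < r) :
    IsPCRep (stepOn s α) (jext s) α :=
  isPCRep_stepOn (strictMono_of_near hsep hsr) (by linarith [hend 0, (abs_lt.1 (hsr 0)).1])
    (by linarith [hend (Fin.last n), (abs_lt.1 (hsr (Fin.last n))).2]) α

lemma isPCIn_stepOn_of_near (hsep : ∀ i k, i < k → 2 * r ≤ j k - j i)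
    (hend : ∀ i, r ≤ j i ∧ r ≤ 1 - j i) (hsr : ∀ i, |s i - j i| < r) (hsX : ∀ i, s i ∈ X) :
    IsPCIn (stepOn s α) (X : Set ℝ) := by
  refine ⟨n + 2, jext s, α, isPCRep_stepOn_of_near hsep hend hsr, fun i hi0 hil => ?_⟩
  obtain ⟨i, rfl⟩ : ∃ k : Fin (n + 2), i = k.castSucc := ⟨i.castPred hil, by simp⟩
  obtain ⟨i, rfl⟩ : ∃ k : Fin (n + 1), i = k.succ :=
    ⟨i.pred fun h => hi0 (by rw [h]; rfl), by simp⟩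
  rw [jext_castSucc_succ]
  exact hsX i

lemma jumps_stepOn_le (hsep : ∀ i k, i < k → 2 * r ≤ j k - j i)
    (hend : ∀ i, r ≤ j i ∧ r ≤ 1 - j i) (hsr : ∀ i, |s i - j i| < r) :
    jumps (stepOn s α) ≤ n + 1 :=
  Nat.sInf_le ⟨jext s, α, isPCRep_stepOn_of_near hsep hend hsr⟩

/-- The Potts energy of the discretization is at most the sum of its window energies. -/
lemma IsJumpData.pottsVal_stepOn_le (hf : IsJumpData j α r δ X f) (hX0 : (0 : ℝ) ∈ X)
    (hX1 : (1 : ℝ) ∈ X) (hsep : ∀ i k, i < k → 2 * r ≤ j k - j i)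
    (hend : ∀ i, r ≤ j i ∧ r ≤ 1 - j i) (hsr : ∀ i, |s i - j i| < r) (hγ : 0 ≤ γ) :
    PottsVal γ f (stepOn s α) ≤
      ∑ i, (γ + ∫ t in Ioo (j i - r) (j i + r), |stepOn s α t - f t|) := by
  have hv : IntegrableOn (stepOn s α) (Icc (0 : ℝ) 1) :=
    (isPCRep_stepOn_of_near hsep hend hsr).integrableOn
  have hrest : ∫ t in Icc 0 1 \ ⋃ i, Ioo (j i - r) (j i + r), |stepOn s α t - f t| = 0 := by
    rw [setIntegral_congr_ae (g := fun _ => 0)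
      (measurableSet_Icc.diff (MeasurableSet.iUnion fun i => measurableSet_Ioo)), integral_zero]
    filter_upwards [ae_notMem_finset X] with t htX ht
    have hfar : ∀ i, r ≤ |t - j i| := fun i => by
      by_contra! h
      exact ht.2 (mem_iUnion.2 ⟨i, mem_window_iff.2 h⟩)
    rw [hf.plateau t ht.1 htX hfar, stepOn_eq_of_far hsr hfar, sub_self, abs_zero]
  have hL := integral_mu01_split hsep hend (hv.sub (hf.integrableOn hX0 hX1)).abs
  simp only [Pi.sub_apply] at hL
  rw [hrest, add_zero] at hL
  have hJ : (jumps (stepOn s α) : ℝ) ≤ n + 1 := by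
    exact_mod_cast jumps_stepOn_le hsep hend hsr
  rw [PottsVal, L1dist, hL, Finset.sum_add_distrib]
  simp only [Finset.sum_const, Finset.card_univ, Fintype.card_fin, nsmul_eq_mul]
  push_cast
  linarith [mul_le_mul_of_nonneg_left hJ hγ]

/-- The sum of the window energies of the discretization is a lower bound for the Potts energy,
attained only by discretizations. -/
lemma IsJumpData.le_pottsVal (hf : IsJumpData j α r δ X f) (hX0 : (0 : ℝ) ∈ X)
    (hX1 : (1 : ℝ) ∈ X) (hδ : 0 < δ) (hr : 4 * δ < r)
    (hsep : ∀ i k, i < k → 2 * r ≤ j k - j i) (hend : ∀ i, r ≤ j i ∧ r ≤ 1 - j i)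
    (hadj : ∀ i : Fin (n + 1), α i.castSucc ≠ α i.succ)
    (hγ1 : ∀ i : Fin (n + 1), δ * |α i.succ - α i.castSucc| < γ)
    (hγ2 : ∀ i : Fin (n + 1), γ + δ * |α i.succ - α i.castSucc| <
      (r - δ) * |α i.succ - α i.castSucc|)
    (hs : ∀ i, s i ∈ X ∧ ∀ p ∈ X, |j i - s i| ≤ |j i - p|) (hsr : ∀ i, |s i - j i| < r)
    {u : ℝ → ℝ} (hu : IsPCIn u (X : Set ℝ)) :
    (∑ i, (γ + ∫ t in Ioo (j i - r) (j i + r), |stepOn s α t - f t|)) ≤ PottsVal γ f u ∧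
      (PottsVal γ f u ≤ ∑ i, (γ + ∫ t in Ioo (j i - r) (j i + r), |stepOn s α t - f t|) →
        ∃ s' : Fin (n + 1) → ℝ, (∀ i, s' i ∈ X ∧ ∀ p ∈ X, |j i - s' i| ≤ |j i - p|) ∧
          ∀ᵐ t ∂mu01, u t = stepOn s' α t) := by
  obtain ⟨T, hTcard, hT⟩ := hu.exists_finset_jumps
  have hfi := hf.integrableOn hX0 hX1
  have hui := hu.integrableOn
  have hvi : IntegrableOn (stepOn s α) (Icc (0 : ℝ) 1) :=
    (isPCRep_stepOn_of_near hsep hend hsr).integrableOn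
  have hsub : ∀ i, Ioo (j i - r) (j i + r) ⊆ Icc (0 : ℝ) 1 := fun i t ht =>
    ⟨by linarith [ht.1, (hend i).1], by linarith [ht.2, (hend i).2]⟩
  have hvf : ∀ i, ∀ᵐ t, t ∈ Ioo (j i - r) (j i + r) →
      |stepOn s α t - f t| ≤ |α i.castSucc - f t| ∧
        |stepOn s α t - f t| ≤ |α i.succ - f t| := fun i => by
    filter_upwards [ae_notMem_finset X] with t htX ht
    have hti := mem_window_iff.1 ht
    rw [stepOn_window hsep hsr hti]
    exact hf.nearest_value hX0 hX1 i (hs i).1 (hs i).2 (hsub i ht) htX hti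
  have hsum : ∀ i, ∀ᵐ t, t ∈ Ioo (j i - r) (j i + r) →
      |α i.castSucc - f t| + |α i.succ - f t| = |α i.succ - α i.castSucc| ∧
        (t < j i - δ → f t = α i.castSucc) ∧ (j i + δ < t → f t = α i.succ) := fun i => by
    filter_upwards [ae_notMem_finset X] with t htX ht
    exact hf.abs_sub_add hX0 hX1 i (hsub i ht) htX (mem_window_iff.1 ht)
  have hwin := fun i => window_energy (j := j i) (r := r) (u := u) (f := f) hδ hr (hadj i) (hγ1 i)
    (hγ2 i) (hfi.mono_set (hsub i)) (hui.mono_set (hsub i)) (hvi.mono_set (hsub i))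
    ((hsum i).mono fun t h ht => (h ⟨ht.1, by linarith [ht.2]⟩).2.1 ht.2)
    ((hsum i).mono fun t h ht => (h ⟨by linarith [ht.1], ht.2⟩).2.2 ht.1)
    ((hsum i).mono fun t h ht => (h ht).1) (hvf i) T
    (fun a b ha hab hb => hT a b (by linarith [(hend i).1]) hab (by linarith [(hend i).2]))
  have hγ : 0 ≤ γ := (mul_nonneg hδ.le (abs_nonneg _)).trans (hγ1 0).le
  have hui' : IntegrableOn (fun t => |u t - f t|) (Icc (0 : ℝ) 1) := (hui.sub hfi).abs
  have hL := integral_mu01_split hsep hend hui'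
  have hrest0 : 0 ≤ ∫ t in Icc 0 1 \ ⋃ i, Ioo (j i - r) (j i + r), |u t - f t| :=
    integral_nonneg fun _ => abs_nonneg _
  have hcard : (∑ i, ((T.filter (· ∈ Ioo (j i - r) (j i + r))).card : ℝ)) ≤ jumps u := by
    exact_mod_cast (sum_card_filter_window_le hsep T).trans hTcard
  have hlow : (∑ i, (γ * ((T.filter (· ∈ Ioo (j i - r) (j i + r))).card : ℝ) +
      ∫ t in Ioo (j i - r) (j i + r), |u t - f t|)) +
      ∫ t in Icc 0 1 \ ⋃ i, Ioo (j i - r) (j i + r), |u t - f t| ≤ PottsVal γ f u := by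
    rw [PottsVal, L1dist, hL, Finset.sum_add_distrib, ← Finset.mul_sum]
    linarith [mul_le_mul_of_nonneg_left hcard hγ]
  have hsumle := Finset.sum_le_sum fun i (_ : i ∈ Finset.univ) => (hwin i).1
  refine ⟨by linarith, fun hle => ?_⟩
  have heq := (Finset.sum_eq_sum_iff_of_le fun i (_ : i ∈ Finset.univ) => (hwin i).1).1
    (le_antisymm hsumle (by linarith))
  choose x hxB hxl hxr hxe using fun i => (hwin i).2 (heq i (Finset.mem_univ i)).ge
  have hxj : ∀ i, |x i - j i| < r := fun i => mem_window_iff.1 (hxB i)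
  have hxX : ∀ i, x i ∈ X := fun i =>
    hu.mem_of_jump (by linarith [(hend i).1]) (by linarith [(hend i).2]) (hxB i) (hxl i) (hxr i)
      (hadj i)
  refine ⟨x, fun i => ⟨hxX i, hf.isNearest_of_abs_le i (hadj i) (hxX i) (hxj i) ?_⟩, ?_⟩
  · filter_upwards [hxl i, hxr i, hxe i, hvf i] with t h1 h2 h3 h4 hti
    have htB := mem_window_iff.2 hti
    refine ⟨fun h => ?_, fun h => ?_⟩
    · rw [← h1 ⟨htB.1, h⟩, h3 htB]
      exact (h4 htB).2
    · rw [← h2 ⟨h, htB.2⟩, h3 htB]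
      exact (h4 htB).1
  · have hrest : ∫ t in Icc 0 1 \ ⋃ i, Ioo (j i - r) (j i + r), |u t - f t| = 0 := by linarith
    have hmeas : MeasurableSet (Icc (0 : ℝ) 1 \ ⋃ i, Ioo (j i - r) (j i + r)) :=
      measurableSet_Icc.diff (MeasurableSet.iUnion fun i => measurableSet_Ioo)
    rw [setIntegral_eq_zero_iff_of_nonneg_ae (Eventually.of_forall fun _ => abs_nonneg _)
      (hui'.mono_set sdiff_subset)] at hrest
    have hrest' := (ae_restrict_iff' hmeas).1 hrest
    rw [ae_mu01_iff]
    filter_upwards [hrest', ae_all_iff.2 hxl, ae_all_iff.2 hxr, ae_notMem_finset X] with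
      t h1 h2 h3 htX ht
    by_cases hfar : ∀ i, r ≤ |t - j i|
    · have := h1 ⟨ht, fun h => by
        obtain ⟨i, hi⟩ := mem_iUnion.1 h
        exact (hfar i).not_gt (mem_window_iff.1 hi)⟩
      simp only [Pi.zero_apply, abs_eq_zero, sub_eq_zero] at this
      rw [this, hf.plateau t ht htX hfar, stepOn_eq_of_far hxj hfar]
    · push Not at hfar
      obtain ⟨i, hi⟩ := hfar
      have htB := mem_window_iff.2 hi
      rw [stepOn_window hsep hxj hi]
      split_ifs with h
      · exact h3 i ⟨h, htB.2⟩
      · exact h2 i ⟨htB.1, lt_of_le_of_ne (not_lt.1 h) fun h => htX (h ▸ hxX i)⟩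

end Global

section Minimizers

lemma abs_sub_le_mesh_of_isNearest {X : Finset ℝ} (hX0 : (0 : ℝ) ∈ X) (hX1 : (1 : ℝ) ∈ X)
    {η : ℝ} (hη : 0 ≤ η)
    (hmesh : ∀ a ∈ X, ∀ b ∈ X, a < b → (∀ c ∈ X, c ≤ a ∨ b ≤ c) → b - a ≤ η) {x y : ℝ}
    (hx : x ∈ Icc (0 : ℝ) 1) (hy : ∀ p ∈ X, |x - y| ≤ |x - p|) : |y - x| ≤ η := by
  rw [abs_sub_comm]
  by_cases hxX : x ∈ X
  · simpa using (hy x hxX).trans (by simpa using hη)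
  · obtain ⟨a, ha, b, hb, hcell, hxab⟩ := exists_cell hX0 hX1 hx hxX
    have h1 := hy a ha
    rw [abs_of_pos (sub_pos.2 hxab.1)] at h1
    linarith [hmesh a ha b hb (hxab.1.trans hxab.2) hcell, hxab.2]

variable {n : ℕ} {α : Fin (n + 2) → ℝ}

lemma hjumpMin_pos (hadj : ∀ i : Fin (n + 1), α i.castSucc ≠ α i.succ) : 0 < hjumpMin α := by
  rw [hjumpMin, Finset.lt_inf'_iff]
  exact fun i _ => abs_pos.2 (sub_ne_zero.2 (hadj i).symm)

lemma hjumpMin_le (α : Fin (n + 2) → ℝ) (i : Fin (n + 1)) :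
    hjumpMin α ≤ |α i.succ - α i.castSucc| :=
  Finset.inf'_le (fun i : Fin (n + 1) => |α i.succ - α i.castSucc|) (Finset.mem_univ i)

lemma le_hjumpMax (α : Fin (n + 2) → ℝ) (i : Fin (n + 1)) :
    |α i.succ - α i.castSucc| ≤ hjumpMax α :=
  Finset.le_sup' (fun i : Fin (n + 1) => |α i.succ - α i.castSucc|) (Finset.mem_univ i)

lemma pottsIn_of_isPCIn {γ : ℝ} {f u : ℝ → ℝ} {S : Set ℝ} (hu : IsPCIn u S) :
    PottsIn γ f S u = ENNReal.ofReal (PottsVal γ f u) := by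
  rw [PottsIn, if_pos hu, PottsVal]

lemma pottsVal_nonneg {γ : ℝ} (hγ : 0 ≤ γ) (f u : ℝ → ℝ) : 0 ≤ PottsVal γ f u :=
  add_nonneg (mul_nonneg hγ (Nat.cast_nonneg _)) (integral_nonneg fun _ => abs_nonneg _)

lemma abs_stepOn_le {m : ℕ} (s : Fin m → ℝ) (β : Fin (m + 1) → ℝ) (t : ℝ) :
    |stepOn s β t| ≤ ∑ i, |β i| :=
  Finset.single_le_sum (f := fun i => |β i|) (fun _ _ => abs_nonneg _) (Finset.mem_univ _)

/-- Step functions with fixed values depend continuously in `L¹` on their jump locations. -/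
lemma tendsto_L1dist_stepOn {m : ℕ} {j : Fin m → ℝ} {β : Fin (m + 1) → ℝ}
    {s : ℕ → Fin m → ℝ} (hs : ∀ i, Tendsto (fun k => s k i) atTop (nhds (j i)))
    (hj : AEStronglyMeasurable (stepOn j β) mu01)
    (hsm : ∀ k, AEStronglyMeasurable (stepOn (s k) β) mu01) :
    Tendsto (fun k => L1dist (stepOn (s k) β) (stepOn j β)) atTop (nhds 0) := by
  have : IsFiniteMeasure mu01 := by rw [mu01]; infer_instance
  have hlim : Tendsto (fun k => L1dist (stepOn (s k) β) (stepOn j β)) atTop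
      (nhds (∫ _, (0 : ℝ) ∂mu01)) := by
    refine tendsto_integral_of_dominated_convergence (fun _ => 2 * ∑ i, |β i|)
      (fun k => ((hsm k).sub hj).norm) (integrable_const _)
      (fun k => ae_of_all _ fun t => ?_) ?_
    · rw [Real.norm_eq_abs, abs_abs]
      linarith [abs_sub (stepOn (s k) β t) (stepOn j β t), abs_stepOn_le (s k) β t,
        abs_stepOn_le j β t]
    · refine ae_mu01_iff.2 ?_
      filter_upwards [ae_notMem_finset (Finset.univ.image j)] with t ht _
      refine tendsto_const_nhds.congr' ?_
      have hev : ∀ i, ∀ᶠ k in atTop, s k i < t ↔ j i < t := fun i => by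
        rcases lt_trichotomy (j i) t with h | h | h
        · filter_upwards [(hs i).eventually_lt_const h] with k hk
          exact iff_of_true hk h
        · exact absurd (Finset.mem_image.2 ⟨i, Finset.mem_univ _, h⟩) ht
        · filter_upwards [(hs i).eventually_const_lt h] with k hk
          exact iff_of_false hk.not_gt h.not_gt
      filter_upwards [eventually_all.2 hev] with k hk
      rw [stepOn_congr β hk, sub_self, abs_zero]
  simpa using hlim

/-- Nearest neighbours in nested sets with dense union converge to the approximated point. -/
lemma tendsto_of_isNearest {X : ℕ → Finset ℝ} (hX : ∀ k, X k ⊆ X (k + 1)) {x : ℝ}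
    (hx : x ∈ closure (⋃ k, (X k : Set ℝ))) {y : ℕ → ℝ}
    (hy : ∀ k, ∀ p ∈ X k, |x - y k| ≤ |x - p|) : Tendsto y atTop (nhds x) := by
  refine Metric.tendsto_atTop.2 fun ε hε => ?_
  obtain ⟨p, hp, hxp⟩ := Metric.mem_closure_iff.1 hx ε hε
  obtain ⟨k₀, hk₀⟩ := mem_iUnion.1 hp
  refine ⟨k₀, fun k hk => ?_⟩
  rw [dist_comm, Real.dist_eq]
  exact (hy k p (monotone_nat_of_le_succ hX hk hk₀)).trans_lt hxp

end Minimizers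

theorem statement_17
    (n : ℕ) (j : Fin (n + 1) → ℝ) (α : Fin (n + 2) → ℝ)
    (hj : StrictMono j) (hj0 : 0 < j 0) (hj1 : j (Fin.last n) < 1)
    (hadj : ∀ i : Fin (n + 1), α i.castSucc ≠ α i.succ)
    (K : ℝ → ℝ) (κ : ℝ) (hκ : 0 < κ)
    (hKint : Integrable K) (hKpos : ∀ x, 0 ≤ K x)
    (hKsym : ∀ x, K (-x) = K x) (hKnorm : (∫ x, K x) = 1)
    (hKsupp : Function.support K ⊆ Set.Icc (-κ) κ)
    (hKpos0 : ∃ ε > 0, ∀ x : ℝ, |x| < ε → 0 < K x)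
    -- the discretization sets `X k` with mesh sizes `η k`
    (X : ℕ → Finset ℝ) (hX0 : ∀ k, (0:ℝ) ∈ X k) (hX1 : ∀ k, (1:ℝ) ∈ X k)
    (hXsub : ∀ k, (X k : Set ℝ) ⊆ Set.Icc 0 1)
    (η : ℕ → ℝ) (hη : ∀ k, 0 ≤ η k)
    (hmesh : ∀ k, ∀ a ∈ X k, ∀ b ∈ X k, a < b →
      (∀ c ∈ X k, c ≤ a ∨ b ≤ c) → b - a ≤ η k)
    (hbound : ∀ k, κ + η k ≤ hjumpMin α * lmin j / (2 * (8 * hjumpMax α + hjumpMin α)))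
    (γ : ℝ)
    (hγlo : ∀ k, 2 * (κ + η k) * hjumpMax α ≤ γ)
    (hγhi : ∀ k, γ ≤ (1 / 2) * hjumpMin α * lmin j -
      (hjumpMin α + 6 * hjumpMax α) * (κ + η k))
    -- the sampled data `fk k`, obtained from `f = K * g` by integral or point sampling
    (fk : ℕ → ℝ → ℝ)
    (hsample : ∀ k, IntegralSampled (X k : Set ℝ) (convK K (stepOn j α)) (fk k) ∨
                    PointSampled (X k : Set ℝ) (convK K (stepOn j α)) (fk k))
    -- `s k i` is a nearest neighbour in `X k` of the jump location `j i`
    (s : ℕ → Fin (n + 1) → ℝ)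
    (hs : ∀ k i, s k i ∈ X k ∧ ∀ p ∈ X k, |j i - s k i| ≤ |j i - p|) :
    -- (1) each `X^k`-discretization `g^k = stepOn (s k) α` minimizes the discrete
    -- Potts functional
    (∀ k, ∀ u : ℝ → ℝ,
      PottsIn γ (fk k) (X k : Set ℝ) (stepOn (s k) α) ≤ PottsIn γ (fk k) (X k : Set ℝ) u) ∧
    -- (2) such discretizations are the only minimizers
    (∀ k, ∀ u : ℝ → ℝ,
      PottsIn γ (fk k) (X k : Set ℝ) u ≤ PottsIn γ (fk k) (X k : Set ℝ) (stepOn (s k) α) →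
      ∃ s' : Fin (n + 1) → ℝ,
        (∀ i, s' i ∈ X k ∧ ∀ p ∈ X k, |j i - s' i| ≤ |j i - p|) ∧
        ∀ᵐ t ∂mu01, u t = stepOn s' α t) ∧
    -- (3) if the discretization sets are nested with dense union, every sequence of
    -- minimizers converges to `g` in `L¹[0,1]`
    ((∀ k, X k ⊆ X (k + 1)) → Set.Icc (0:ℝ) 1 ⊆ closure (⋃ k, (X k : Set ℝ)) →
      ∀ useq : ℕ → ℝ → ℝ,
        (∀ k, ∀ v : ℝ → ℝ,
          PottsIn γ (fk k) (X k : Set ℝ) (useq k) ≤ PottsIn γ (fk k) (X k : Set ℝ) v) →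
        Tendsto (fun k => L1dist (useq k) (stepOn j α)) atTop (nhds 0)) := by
  have hmin := hjumpMin_pos hadj
  have hmax : hjumpMin α ≤ hjumpMax α := (hjumpMin_le α 0).trans (le_hjumpMax α 0)
  have hl := lmin_pos hj hj0 hj1
  obtain ⟨r, hr⟩ : ∃ r, lmin j = 2 * r := ⟨lmin j / 2, by ring⟩
  have hδ : ∀ k, 0 < κ + η k := fun k => by linarith [hη k]
  have hδr : ∀ k, 4 * (κ + η k) < r := fun k => by
    have h := hbound k
    rw [le_div_iff₀ (by linarith), hr] at h
    have : (κ + η k) * 9 * hjumpMin α ≤ r * hjumpMin α := by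
      nlinarith [mul_le_mul_of_nonneg_left hmax (hδ k).le]
    linarith [le_of_mul_le_mul_right this hmin, hδ k]
  have hsep : ∀ i k, i < k → 2 * r ≤ j k - j i := fun i k hik => hr ▸ lmin_le_sub hj hj0 hj1 hik
  have hend : ∀ i, r ≤ j i ∧ r ≤ 1 - j i := fun i => by
    have := lmin_le_apply hj hj0 hj1 i
    constructor <;> linarith
  have hj01 : ∀ i, j i ∈ Icc (0 : ℝ) 1 := fun i => ⟨by linarith [hend i], by linarith [hend i]⟩
  have hγ1 : ∀ k (i : Fin (n + 1)), (κ + η k) * |α i.succ - α i.castSucc| < γ := fun k i => by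
    nlinarith [hγlo k, mul_le_mul_of_nonneg_left (le_hjumpMax α i) (hδ k).le,
      mul_pos (hδ k) (hmin.trans_le hmax)]
  have hγ2 : ∀ k (i : Fin (n + 1)), γ + (κ + η k) * |α i.succ - α i.castSucc| <
      (r - (κ + η k)) * |α i.succ - α i.castSucc| := fun k i => by
    have h := hγhi k
    rw [hr] at h
    nlinarith [mul_le_mul_of_nonneg_left (le_hjumpMax α i) (hδ k).le, mul_pos (hδ k) hmin,
      mul_pos (hδ k) (hmin.trans_le hmax),
      mul_le_mul_of_nonneg_left (hjumpMin_le α i) (by linarith : 0 ≤ r)]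
  have hγ : 0 ≤ γ :=
    ((mul_nonneg (hδ 0).le (abs_nonneg (α (Fin.succ 0) - α (Fin.castSucc 0)))).trans_lt
      (hγ1 0 0)).le
  have hnear : ∀ k (s' : Fin (n + 1) → ℝ),
      (∀ i, s' i ∈ X k ∧ ∀ p ∈ X k, |j i - s' i| ≤ |j i - p|) → ∀ i, |s' i - j i| < r :=
    fun k s' hs' i => by
      linarith [abs_sub_le_mesh_of_isNearest (hX0 k) (hX1 k) (hη k) (hmesh k) (hj01 i) (hs' i).2,
        hδr k, hη k]
  have hdata : ∀ k, IsJumpData j α r (κ + η k) (X k) (fk k) := fun k =>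
    isJumpData_of_sampled hsep (by linarith [hδr k, hδ k]) hKint hKpos hKsym hKnorm hKsupp hKpos0
      (hX0 k) (hX1 k) (hmesh k) (hsample k)
  have hsr := fun k => hnear k (s k) (hs k)
  have hsIn : ∀ k, IsPCIn (stepOn (s k) α) (X k : Set ℝ) := fun k =>
    isPCIn_stepOn_of_near hsep hend (hsr k) fun i => (hs k i).1
  have hle := fun k => (hdata k).pottsVal_stepOn_le (hX0 k) (hX1 k) hsep hend (hsr k) hγ
  have hge := fun k u (hu : IsPCIn u (X k : Set ℝ)) => (hdata k).le_pottsVal (hX0 k) (hX1 k)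
    (hδ k) (hδr k) hsep hend hadj (hγ1 k) (hγ2 k) (hs k) (hsr k) hu
  have honly : ∀ k, ∀ u : ℝ → ℝ,
      PottsIn γ (fk k) (X k : Set ℝ) u ≤ PottsIn γ (fk k) (X k : Set ℝ) (stepOn (s k) α) →
      ∃ s' : Fin (n + 1) → ℝ,
        (∀ i, s' i ∈ X k ∧ ∀ p ∈ X k, |j i - s' i| ≤ |j i - p|) ∧
        ∀ᵐ t ∂mu01, u t = stepOn s' α t := fun k u hu => by
    rw [pottsIn_of_isPCIn (hsIn k)] at hu
    by_cases huX : IsPCIn u (X k : Set ℝ)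
    · rw [pottsIn_of_isPCIn huX, ENNReal.ofReal_le_ofReal_iff (pottsVal_nonneg hγ _ _)] at hu
      exact (hge k u huX).2 (hu.trans (hle k))
    · rw [PottsIn, if_neg huX, top_le_iff] at hu
      exact absurd hu ENNReal.ofReal_ne_top
  refine ⟨fun k u => ?_, honly, fun hnest hdense useq huseq => ?_⟩
  · by_cases huX : IsPCIn u (X k : Set ℝ)
    · rw [pottsIn_of_isPCIn (hsIn k), pottsIn_of_isPCIn huX]
      exact ENNReal.ofReal_le_ofReal ((hle k).trans (hge k u huX).1)
    · rw [PottsIn, PottsIn, if_neg huX]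
      exact le_top
  · choose s' hs' hus' using fun k => honly k (useq k) (huseq k _)
    have heq : ∀ k, L1dist (useq k) (stepOn j α) = L1dist (stepOn (s' k) α) (stepOn j α) :=
      fun k => integral_congr_ae <| by
        filter_upwards [hus' k] with t ht
        rw [ht]
    simp only [heq]
    exact tendsto_L1dist_stepOn
      (fun i => tendsto_of_isNearest hnest (hdense (hj01 i)) fun k => (hs' k i).2)
      (isPCRep_stepOn hj hj0 hj1 α).integrableOn.aestronglyMeasurable
      fun k => (isPCRep_stepOn_of_near hsep hend
        (hnear k _ (hs' k))).integrableOn.aestronglyMeasurable
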